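/- arXiv:1809.10354 — 2 statements merged into one kernel-verified Lean document; each statement's English description precedes it below -/
import Mathlib

section
/- Let n ≥ 1, p ∈ [1,∞), r ∈ ℕ, and μ₀ > 0. Let 𝒯 be a finite simplicial complex in ℝ^n which is face-connected, in which every simplex is a face of an n-dimensional simplex, whose every simplex has shape measure at most μ₀, and let Ω be the interior of the union of the simplices of 𝒯. Then there exists a constant C > 0, depending only on n, p, r and μ₀, such that for every continuously differentiable function v on a neighborhood of the closure of Ω: the infimum, over all continuous functions w on the closure of Ω whose restriction to each n-simplex T ∈ 𝒯 is a polynomial of total degree ≤ r, of ( Σ_{T ∈ 𝒯, dim T = n} ∫_T ‖∇v − ∇w‖^p dx )^{1/p} is at most C times ( Σ_{T ∈ 𝒯, dim T = n} inf over polynomials q of total degree ≤ r of ∫_T ‖∇v − ∇q‖^p dx )^{1/p}. In other words, the best approximation error of v in the broken W^{1,p} seminorm by continuous piecewise polynomials is equivalent, up to a constant, to the best approximation error by fully discontinuous piecewise polynomials. -/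
/-!
The estimate is proved by a quasi-interpolation of Scott–Zhang type, written in barycentric
coordinates.

On an `n`-simplex `T` with barycentric coordinates `β x` (`x ∈ T`), a polynomial `q` of degree at
most `r` is a unique homogeneous form of degree `r` in the `β x` (`homog`).  The barycentric
coordinates of two simplices of a complex agree on their intersection, and only monomials in the
common vertices survive there.  So polynomials with one global family of coefficients `b α`, indexed
by exponents `α` on the set of all points, glue to a continuous function (`IsMesh.exists_glue`).  It
remains to choose `b` close to the coefficients of the given discontinuous piecewise polynomial
`q T`.

A constant is added to `q T` so that `v - q T` satisfies a Poincaré inequality on `T`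
(`exists_normalized`).  If two simplices share a facet, the trace inequality on the facet and the
equivalence of norms on forms bound the jump of the coefficients belonging to that facet by
`hdiam T` times the mean of `‖∇(v - q)‖`, summed over the two simplices (`exists_jump_const`).  The
trace of `v` itself drops out because `v` is single-valued.  For `n ≥ 2`, simplices in the star of a
face have comparable diameters and their number is bounded, by shape regularity; face-connectedness
and a chain argument (`chain_bound`) then compare all simplices containing the vertices of `α`, and
`b α` can be the coefficient from any of them (`exists_coeffApprox_of_two_le`).  For `n = 1`,
neighbouring intervals need not be of comparable size; there `b` at a vertex is the value of `v`
(`exists_coeffApprox_of_eq_one`).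

Since `‖∇β‖` is at most a multiple of `1 / hdiam T`, the factor `hdiam T` cancels in the gradient of
the difference (`IsBary.fderiv_baryPoly_le`), and summation over patches of bounded overlap gives the
estimate for globally `C¹` functions (`exists_error_const`).  A cut-off function reduces the general
case to this one, and the infimum over `q T` is reached by letting an `ε` tend to zero.
-/

open MeasureTheory
open scoped Classical

/-- A finite simplicial complex is *face-connected* if, whenever two
`n`-dimensional simplices `S, T` intersect, one can traverse from `S` to `T`
through a chain of `n`-dimensional simplices in which consecutive simplices meet
in a common facet containing `S ∩ T`. -/
def FaceConnected (n : ℕ)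
    (K : Geometry.SimplicialComplex ℝ (EuclideanSpace ℝ (Fin n))) : Prop :=
  ∀ S T : Finset (EuclideanSpace ℝ (Fin n)),
    S ∈ K.faces → T ∈ K.faces → S.card = n + 1 → T.card = n + 1 →
    ((convexHull ℝ (S : Set (EuclideanSpace ℝ (Fin n)))) ∩
        convexHull ℝ (T : Set (EuclideanSpace ℝ (Fin n)))).Nonempty →
    ∃ (N : ℕ) (c : Fin (N + 1) → Finset (EuclideanSpace ℝ (Fin n))),
      c 0 = S ∧ c (Fin.last N) = T ∧
      (∀ i, c i ∈ K.faces ∧ (c i).card = n + 1) ∧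
      ∀ i : Fin N,
        (c i.castSucc ∩ c i.succ).card = n ∧ S ∩ T ⊆ c i.castSucc ∩ c i.succ

section

/-! ### Barycentric coordinates -/

/-- `IsBary T β` says that the points of `T` form an affine basis of `ℝⁿ` and that `β x` is the
barycentric coordinate with respect to the vertex `x`.  The family is indexed by all of `ℝⁿ` and
vanishes off `T`, so that coordinates with respect to different simplices can be compared. -/
structure IsBary {n : ℕ} (T : Finset (EuclideanSpace ℝ (Fin n)))
    (β : EuclideanSpace ℝ (Fin n) → (EuclideanSpace ℝ (Fin n) →ᵃ[ℝ] ℝ)) : Prop where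
  top : affineSpan ℝ (T : Set (EuclideanSpace ℝ (Fin n))) = ⊤
  card : T.card = n + 1
  off : ∀ x, x ∉ T → β x = 0
  sum_one : ∀ y, ∑ x ∈ T, β x y = 1
  comb : ∀ y, ∑ x ∈ T, β x y • x = y
  uniq : ∀ c : EuclideanSpace ℝ (Fin n) → ℝ, ∑ x ∈ T, c x = 1 →
    ∀ x ∈ T, β x (∑ z ∈ T, c z • z) = c x

variable {n : ℕ}

lemma exists_isBary (T : Finset (EuclideanSpace ℝ (Fin n)))
    (hT : AffineIndependent ℝ ((↑) : T → EuclideanSpace ℝ (Fin n))) (hc : T.card = n + 1) :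
    ∃ β, IsBary T β := by
  have htop : affineSpan ℝ (Set.range ((↑) : T → EuclideanSpace ℝ (Fin n))) = ⊤ := by
    rw [hT.affineSpan_eq_top_iff_card_eq_finrank_add_one]
    simp [hc]
  let b : AffineBasis T ℝ (EuclideanSpace ℝ (Fin n)) := ⟨(↑), hT, htop⟩
  have hb : ∀ i : T, b i = (i : EuclideanSpace ℝ (Fin n)) := fun i => rfl
  refine ⟨fun x => if h : x ∈ T then b.coord ⟨x, h⟩ else 0, ?_, hc, ?_, ?_, ?_, ?_⟩
  · simpa using htop
  · intro x hx
    simp [hx]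
  · intro y
    rw [← b.sum_coord_apply_eq_one y, ← Finset.sum_coe_sort]
    refine Finset.sum_congr rfl fun x _ => ?_
    simp
  · intro y
    conv_rhs => rw [← b.linear_combination_coord_eq_self y]
    rw [← Finset.sum_coe_sort]
    refine Finset.sum_congr rfl fun x _ => ?_
    simp [hb]
  · intro c hc1 x hx
    have hw : ∑ i : T, c i = 1 := by rw [← hc1]; exact Finset.sum_coe_sort T c
    have h2 := b.coord_apply_combination_of_mem (s := Finset.univ) (i := ⟨x, hx⟩)
      (Finset.mem_univ _) (w := fun i : T => c i) hw
    rw [Finset.affineCombination_eq_linear_combination _ _ _ hw] at h2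
    simp only [hx, dif_pos]
    rw [← Finset.sum_coe_sort]
    exact h2

namespace IsBary

variable {T : Finset (EuclideanSpace ℝ (Fin n))}
  {β : EuclideanSpace ℝ (Fin n) → (EuclideanSpace ℝ (Fin n) →ᵃ[ℝ] ℝ)}

lemma mem_hull_iff (h : IsBary T β) (y : EuclideanSpace ℝ (Fin n)) :
    y ∈ convexHull ℝ (T : Set (EuclideanSpace ℝ (Fin n))) ↔ ∀ x ∈ T, 0 ≤ β x y := by
  rw [Finset.mem_convexHull']
  constructor
  · rintro ⟨w, hw0, hw1, hw2⟩ x hx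
    rw [← hw2, h.uniq w hw1 x hx]
    exact hw0 x hx
  · intro hy
    exact ⟨fun x => β x y, hy, h.sum_one y, h.comb y⟩

lemma nonneg (h : IsBary T β) {y : EuclideanSpace ℝ (Fin n)}
    (hy : y ∈ convexHull ℝ (T : Set (EuclideanSpace ℝ (Fin n)))) (x) : 0 ≤ β x y := by
  by_cases hx : x ∈ T
  · exact (h.mem_hull_iff y).1 hy x hx
  · simp [h.off x hx]

lemma le_one (h : IsBary T β) {y : EuclideanSpace ℝ (Fin n)}
    (hy : y ∈ convexHull ℝ (T : Set (EuclideanSpace ℝ (Fin n)))) (x) : β x y ≤ 1 := by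
  by_cases hx : x ∈ T
  · rw [← h.sum_one y]
    exact Finset.single_le_sum (f := fun x => β x y) (fun z _ => h.nonneg hy z) hx
  · simp [h.off x hx]

/-- Coordinates of a point written as an affine combination of some of the vertices. -/
lemma eq_of_subset (h : IsBary T β) {F : Finset (EuclideanSpace ℝ (Fin n))} (hF : F ⊆ T)
    (c : EuclideanSpace ℝ (Fin n) → ℝ) (hc : ∑ x ∈ F, c x = 1) (x : EuclideanSpace ℝ (Fin n)) :
    β x (∑ z ∈ F, c z • z) = if x ∈ F then c x else 0 := by
  by_cases hx : x ∈ T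
  · have h1 : ∑ z ∈ T, (if z ∈ F then c z else 0) = 1 := by
      rw [Finset.sum_ite_mem, Finset.inter_eq_right.2 hF, hc]
    have h2 : ∑ z ∈ F, c z • z = ∑ z ∈ T, (if z ∈ F then c z else 0) • z := by
      simp only [ite_smul, zero_smul]
      rw [Finset.sum_ite_mem, Finset.inter_eq_right.2 hF]
    rw [h2, h.uniq _ h1 x hx]
  · have : x ∉ F := fun hxF => hx (hF hxF)
    simp [h.off x hx, this]

lemma vertex (h : IsBary T β) {x : EuclideanSpace ℝ (Fin n)} (hx : x ∈ T) (z) :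
    β z x = if z = x then 1 else 0 := by
  have := h.eq_of_subset (F := {x}) (by simpa using hx) (fun _ => 1) (by simp) z
  simpa using this

lemma interior_nonempty (h : IsBary T β) :
    (interior (convexHull ℝ (T : Set (EuclideanSpace ℝ (Fin n))))).Nonempty := by
  rw [interior_convexHull_nonempty_iff_affineSpan_eq_top]
  exact h.top

lemma isCompact_hull (T : Finset (EuclideanSpace ℝ (Fin n))) :
    IsCompact (convexHull ℝ (T : Set (EuclideanSpace ℝ (Fin n)))) :=
  T.finite_toSet.isCompact_convexHull (𝕜 := ℝ)

/-- Barycentric coordinates with respect to two simplices of a complex agree on their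
intersection. -/
lemma consistent {S : Finset (EuclideanSpace ℝ (Fin n))}
    {γ : EuclideanSpace ℝ (Fin n) → (EuclideanSpace ℝ (Fin n) →ᵃ[ℝ] ℝ)}
    (hS : IsBary S γ) (hT : IsBary T β) {y : EuclideanSpace ℝ (Fin n)}
    (hy : y ∈ convexHull ℝ ((S : Set (EuclideanSpace ℝ (Fin n))) ∩ T))
    (x) : γ x y = β x y := by
  rw [← Finset.coe_inter, Finset.mem_convexHull'] at hy
  obtain ⟨w, _, hw1, hw2⟩ := hy
  rw [← hw2, hS.eq_of_subset Finset.inter_subset_left w hw1,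
    hT.eq_of_subset Finset.inter_subset_right w hw1]

end IsBary

end

section

/-! ### Metric and volume estimates for shape-regular simplices -/

/-- The closed simplex spanned by a finite set of vertices. -/
abbrev hull {n : ℕ} (T : Finset (EuclideanSpace ℝ (Fin n))) : Set (EuclideanSpace ℝ (Fin n)) :=
  convexHull ℝ (T : Set (EuclideanSpace ℝ (Fin n)))

/-- The diameter of the simplex spanned by `T`. -/
noncomputable abbrev hdiam {n : ℕ} (T : Finset (EuclideanSpace ℝ (Fin n))) : ℝ :=
  Metric.diam (hull T)

/-- The Lebesgue volume of the simplex spanned by `T`. -/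
noncomputable abbrev hvol {n : ℕ} (T : Finset (EuclideanSpace ℝ (Fin n))) : ℝ :=
  (volume (hull T)).toReal

/-- The volume of the Euclidean unit ball of `ℝⁿ`. -/
noncomputable abbrev ballVol (n : ℕ) : ℝ :=
  (volume (Metric.ball (0 : EuclideanSpace ℝ (Fin n)) 1)).toReal

variable {n : ℕ}

lemma ballVol_pos : 0 < ballVol n :=
  ENNReal.toReal_pos (Metric.measure_ball_pos _ _ one_pos).ne' measure_ball_lt_top.ne

lemma volume_closedBall_toReal (x : EuclideanSpace ℝ (Fin n)) {r : ℝ} (hr : 0 ≤ r) :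
    (volume (Metric.closedBall x r)).toReal = r ^ n * ballVol n := by
  rw [Measure.addHaar_closedBall _ _ hr, ENNReal.toReal_mul, ENNReal.toReal_ofReal (by positivity)]
  simp

lemma volume_hull_ne_top (T : Finset (EuclideanSpace ℝ (Fin n))) : volume (hull T) ≠ ⊤ :=
  (IsBary.isCompact_hull T).measure_lt_top.ne

lemma dist_le_hdiam (T : Finset (EuclideanSpace ℝ (Fin n))) {x y : EuclideanSpace ℝ (Fin n)}
    (hx : x ∈ hull T) (hy : y ∈ hull T) : dist x y ≤ hdiam T :=
  Metric.dist_le_diam_of_mem (IsBary.isCompact_hull T).isBounded hx hy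

section
variable {T : Finset (EuclideanSpace ℝ (Fin n))}
  {β : EuclideanSpace ℝ (Fin n) → (EuclideanSpace ℝ (Fin n) →ᵃ[ℝ] ℝ)}

lemma IsBary.hvol_pos (h : IsBary T β) : 0 < hvol T :=
  ENNReal.toReal_pos (Measure.measure_pos_of_nonempty_interior _ h.interior_nonempty).ne'
    (volume_hull_ne_top T)

lemma IsBary.hdiam_pos (h : IsBary T β) (hn : 1 ≤ n) : 0 < hdiam T := by
  have h2 : 1 < T.card := by rw [h.card]; omega
  obtain ⟨x, hx, y, hy, hxy⟩ := Finset.one_lt_card.1 h2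
  exact (dist_pos.2 hxy).trans_le
    (dist_le_hdiam T (subset_convexHull ℝ _ hx) (subset_convexHull ℝ _ hy))

/-- The shape measure, expressed through Hausdorff measure, controls the Lebesgue volume: the two
measures differ by a factor that depends on `n` only. -/
lemma exists_shape_const (n : ℕ) : ∃ κ : ℝ, 0 < κ ∧
    ∀ (T : Finset (EuclideanSpace ℝ (Fin n))) β, IsBary T β → ∀ μ₀ : ℝ, 0 < μ₀ →
      Metric.diam (convexHull ℝ (T : Set (EuclideanSpace ℝ (Fin n)))) ^ (T.card - 1) /
            (μH[((T.card : ℝ) - 1)]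
              (convexHull ℝ (T : Set (EuclideanSpace ℝ (Fin n))))).toReal ≤ μ₀ →
      hdiam T ^ n ≤ κ * μ₀ * hvol T := by
  have hH : (μH[(n : ℝ)] : Measure (EuclideanSpace ℝ (Fin n))).IsAddHaarMeasure := by
    have := MeasureTheory.isAddHaarMeasure_hausdorffMeasure (E := EuclideanSpace ℝ (Fin n))
    simpa using this
  set c := Measure.addHaarScalarFactor (μH[(n : ℝ)] : Measure (EuclideanSpace ℝ (Fin n))) volume
    with hc
  have heq : (μH[(n : ℝ)] : Measure (EuclideanSpace ℝ (Fin n))) = c • volume :=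
    Measure.isAddLeftInvariant_eq_smul _ _
  refine ⟨c + 1, by positivity, fun T β h μ₀ hμ hs => ?_⟩
  have hcard : ((T.card : ℝ) - 1) = n := by rw [h.card]; push_cast; ring
  rw [hcard, h.card, Nat.add_sub_cancel] at hs
  have hpos : 0 < (μH[(n : ℝ)] (hull T)).toReal :=
    ENNReal.toReal_pos (Measure.measure_pos_of_nonempty_interior _ h.interior_nonempty).ne'
      (IsBary.isCompact_hull T).measure_lt_top.ne
  rw [div_le_iff₀ hpos] at hs
  have hval : (μH[(n : ℝ)] (hull T)).toReal = c * hvol T := by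
    rw [heq]
    simp
  rw [hval] at hs
  have := h.hvol_pos
  calc hdiam T ^ n ≤ μ₀ * (c * hvol T) := hs
    _ ≤ (c + 1) * μ₀ * hvol T := by nlinarith [mul_pos hμ this]

/-- Each barycentric coordinate of a shape-regular simplex has gradient of size at most a constant
over the diameter.  Stretching the simplex by the transvection `y ↦ y + ℓ(y) h z` keeps it in a
ball of radius `2h` while multiplying its volume by `1 + h ℓ(z)`. -/
lemma IsBary.linear_bound (h : IsBary T β) (hn : 1 ≤ n) {M : ℝ}
    (hM : hdiam T ^ n ≤ M * hvol T) (x z : EuclideanSpace ℝ (Fin n)) :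
    |(β x).linear z| ≤ 2 ^ n * ballVol n * M / hdiam T * ‖z‖ := by
  have hd := h.hdiam_pos hn
  have hv := h.hvol_pos
  have hb := ballVol_pos (n := n)
  have hM0 : 0 < M := by
    by_contra hneg
    have : 0 < hdiam T ^ n := by positivity
    nlinarith
  by_cases hx : x ∈ T
  swap
  · rw [h.off x hx]; simp; positivity
  -- the estimate for vectors of norm at most one on which the coordinate increases
  have key : ∀ z : EuclideanSpace ℝ (Fin n), ‖z‖ ≤ 1 → 0 ≤ (β x).linear z →
      (β x).linear z ≤ 2 ^ n * ballVol n * M / hdiam T := by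
    intro z hz hz0
    set L := LinearMap.transvection (β x).linear (hdiam T • z) with hL
    have hdet : LinearMap.det L = 1 + hdiam T * (β x).linear z := by
      rw [hL, LinearMap.transvection.det]; simp
    have hsub : L '' hull T ⊆ Metric.closedBall (L x) (2 * hdiam T) := by
      rintro _ ⟨y, hy, rfl⟩
      have hxm : x ∈ hull T := subset_convexHull ℝ _ hx
      have hdy : ‖y - x‖ ≤ hdiam T := by
        rw [← dist_eq_norm]; exact dist_le_hdiam T hy hxm
      rw [mem_closedBall_iff_norm, ← map_sub, hL, LinearMap.transvection.apply]
      have h1 : |(β x).linear (y - x)| ≤ 1 := by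
        have : (β x).linear (y - x) = β x y - β x x := by
          simpa using (AffineMap.linearMap_vsub (β x) y x)
        rw [this, h.vertex hx, if_pos rfl, abs_le]
        constructor <;> linarith [h.nonneg hy x, h.le_one hy x]
      calc ‖y - x + (β x).linear (y - x) • hdiam T • z‖
          ≤ ‖y - x‖ + |(β x).linear (y - x)| * (hdiam T * ‖z‖) := by
            refine (norm_add_le _ _).trans ?_
            rw [norm_smul, norm_smul, Real.norm_eq_abs, Real.norm_eq_abs, abs_of_pos hd]
        _ ≤ hdiam T + 1 * (hdiam T * 1) := by gcongr
        _ = 2 * hdiam T := by ring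
    have hmeas := measure_mono (μ := volume) hsub
    rw [Measure.addHaar_image_linearMap] at hmeas
    have hr := ENNReal.toReal_mono measure_closedBall_lt_top.ne hmeas
    rw [volume_closedBall_toReal _ (by positivity), ENNReal.toReal_mul,
      ENNReal.toReal_ofReal (abs_nonneg _), hdet, abs_of_pos (by positivity)] at hr
    rw [le_div_iff₀ hd]
    have h3 : hdiam T * (β x).linear z * hvol T ≤ (2 ^ n * ballVol n * M) * hvol T := by
      calc hdiam T * (β x).linear z * hvol T
          ≤ (1 + hdiam T * (β x).linear z) * hvol T := by nlinarith
        _ ≤ (2 * hdiam T) ^ n * ballVol n := hr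
        _ = 2 ^ n * ballVol n * hdiam T ^ n := by rw [mul_pow]; ring
        _ ≤ 2 ^ n * ballVol n * (M * hvol T) := by gcongr
        _ = _ := by ring
    have := le_of_mul_le_mul_right h3 hv
    linarith
  have key2 : ∀ z : EuclideanSpace ℝ (Fin n), ‖z‖ ≤ 1 →
      |(β x).linear z| ≤ 2 ^ n * ballVol n * M / hdiam T := by
    intro z hz
    rcases le_total 0 ((β x).linear z) with h0 | h0
    · rw [abs_of_nonneg h0]; exact key z hz h0
    · rw [abs_of_nonpos h0, ← map_neg]
      exact key (-z) (by simpa using hz) (by simpa using h0)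
  by_cases hz : z = 0
  · simp [hz]
  have hz' : 0 < ‖z‖ := norm_pos_iff.2 hz
  have := key2 (‖z‖⁻¹ • z) (by rw [norm_smul, norm_inv, norm_norm, inv_mul_cancel₀ hz'.ne'])
  rw [map_smul, smul_eq_mul, abs_mul, abs_of_pos (by positivity), inv_mul_le_iff₀ hz'] at this
  linarith

lemma IsBary.hvol_le (h : IsBary T β) : hvol T ≤ ballVol n * hdiam T ^ n := by
  obtain ⟨x, hx⟩ : T.Nonempty := Finset.card_pos.1 (by rw [h.card]; omega)
  have hsub : hull T ⊆ Metric.closedBall x (hdiam T) := fun y hy =>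
    dist_le_hdiam T hy (subset_convexHull ℝ _ hx)
  have := ENNReal.toReal_mono measure_closedBall_lt_top.ne (measure_mono (μ := volume) hsub)
  rw [volume_closedBall_toReal _ Metric.diam_nonneg] at this
  linarith

/-- Two distinct vertices of a shape-regular simplex are at distance comparable to the diameter. -/
lemma IsBary.hdiam_le_of_edge (h : IsBary T β) (hn : 1 ≤ n) {M : ℝ}
    (hM : hdiam T ^ n ≤ M * hvol T) {x y : EuclideanSpace ℝ (Fin n)} (hx : x ∈ T) (hy : y ∈ T)
    (hxy : x ≠ y) : hdiam T ≤ 2 ^ n * ballVol n * M * dist x y := by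
  have hd := h.hdiam_pos hn
  have h1 := h.linear_bound hn hM x (x - y)
  have : (β x).linear (x - y) = 1 := by
    have h2 : (β x).linear (x - y) = β x x - β x y := by
      simpa using (AffineMap.linearMap_vsub (β x) x y)
    rw [h2, h.vertex hx, h.vertex hy, if_pos rfl, if_neg hxy, sub_zero]
  rw [this, abs_one, ← dist_eq_norm, div_mul_eq_mul_div, one_le_div hd] at h1
  exact h1

/-- The convex hull of a set of points missing one vertex of `T` has zero volume. -/
lemma IsBary.volume_inter_null (h : IsBary T β) {S : Finset (EuclideanSpace ℝ (Fin n))}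
    {x : EuclideanSpace ℝ (Fin n)} (hx : x ∈ T) (hxS : x ∉ S) :
    volume (convexHull ℝ ((S : Set (EuclideanSpace ℝ (Fin n))) ∩ T)) = 0 := by
  let A : AffineSubspace ℝ (EuclideanSpace ℝ (Fin n)) :=
    (AffineSubspace.mk' (0 : ℝ) ⊥).comap (β x)
  have hA : ∀ y, y ∈ A ↔ β x y = 0 := by
    intro y
    simp [A, AffineSubspace.mem_comap, AffineSubspace.mem_mk']
  have hne : A ≠ ⊤ := by
    intro htop
    have : x ∈ A := htop ▸ AffineSubspace.mem_top ℝ _ x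
    rw [hA, h.vertex hx, if_pos rfl] at this
    exact one_ne_zero this
  refine measure_mono_null ?_ (Measure.addHaar_affineSubspace volume A hne)
  refine convexHull_min ?_ A.convex
  rintro y ⟨hyS, hyT⟩
  change y ∈ A
  rw [hA, h.vertex hyT, if_neg]
  rintro rfl
  exact hxS hyS

end

/-- Shape-regular simplices with a common vertex and null overlaps: each fills a fixed proportion of
a small ball around the vertex, so there are boundedly many of them. -/
lemma star_card_le (hn : 1 ≤ n) {M : ℝ} (hMn : 0 ≤ M) (𝒮 : Finset (Finset (EuclideanSpace ℝ (Fin n))))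
    (x : EuclideanSpace ℝ (Fin n))
    (hx : ∀ T ∈ 𝒮, x ∈ T) (hB : ∀ T ∈ 𝒮, ∃ β, IsBary T β)
    (hM : ∀ T ∈ 𝒮, hdiam T ^ n ≤ M * hvol T)
    (hdis : ∀ S ∈ 𝒮, ∀ T ∈ 𝒮, S ≠ T → volume (hull S ∩ hull T) = 0) :
    (𝒮.card : ℝ) ≤ M * ballVol n := by
  rcases 𝒮.eq_empty_or_nonempty with rfl | hne
  · have := ballVol_pos (n := n)
    simp only [Finset.card_empty, Nat.cast_zero]
    positivity
  obtain ⟨T₀, hT₀, hmin⟩ := 𝒮.exists_min_image (fun T => hdiam T) hne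
  set ε := hdiam T₀ with hε
  have hd : ∀ T ∈ 𝒮, 0 < hdiam T := fun T hT => by
    obtain ⟨β, hβ⟩ := hB T hT
    exact hβ.hdiam_pos hn
  have hε0 : 0 < ε := hd T₀ hT₀
  have hM0 : 0 < M := by
    obtain ⟨β, hβ⟩ := hB T₀ hT₀
    have := hM T₀ hT₀
    have h1 : 0 < hdiam T₀ ^ n := by positivity
    have := hβ.hvol_pos
    by_contra hneg
    nlinarith
  -- Shrink every simplex towards `x` to the smallest diameter `ε`.
  let A : Finset (EuclideanSpace ℝ (Fin n)) → Set (EuclideanSpace ℝ (Fin n)) := fun T =>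
    AffineMap.homothety x (ε / hdiam T) '' hull T
  have hAsub : ∀ T ∈ 𝒮, A T ⊆ hull T ∩ Metric.closedBall x ε := by
    rintro T hT _ ⟨y, hy, rfl⟩
    have ht0 : 0 ≤ ε / hdiam T := by have := hd T hT; positivity
    have ht1 : ε / hdiam T ≤ 1 := by
      rw [div_le_one (hd T hT)]; exact hmin T hT
    have hxm : x ∈ hull T := subset_convexHull ℝ _ (hx T hT)
    constructor
    · rw [AffineMap.homothety_eq_lineMap]
      exact (convex_convexHull ℝ _).lineMap_mem hxm hy ⟨ht0, ht1⟩
    · rw [Metric.mem_closedBall, dist_homothety_center, Real.norm_eq_abs, abs_of_nonneg ht0]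
      calc ε / hdiam T * dist x y ≤ ε / hdiam T * hdiam T := by
            gcongr; exact dist_le_hdiam T hxm hy
        _ = ε := div_mul_cancel₀ _ (hd T hT).ne'
  have hAc : ∀ T, IsCompact (A T) := fun T =>
    (IsBary.isCompact_hull T).image (AffineMap.homothety_continuous _ _)
  have hAvol : ∀ T ∈ 𝒮, ε ^ n / M ≤ (volume (A T)).toReal := by
    intro T hT
    have hdT := hd T hT
    rw [Measure.addHaar_image_homothety, ENNReal.toReal_mul,
      ENNReal.toReal_ofReal (abs_nonneg _), finrank_euclideanSpace, Fintype.card_fin,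
      abs_of_nonneg (by positivity), div_pow, div_le_iff₀ hM0]
    have := hM T hT
    rw [div_mul_eq_mul_div, div_mul_eq_mul_div, le_div_iff₀ (by positivity)]
    have h2 : 0 < ε ^ n := by positivity
    calc ε ^ n * hdiam T ^ n ≤ ε ^ n * (M * hvol T) := by gcongr
      _ = _ := by ring
  have hsum : ∑ T ∈ 𝒮, volume (A T) ≤ volume (Metric.closedBall x ε) := by
    rw [← measure_biUnion_finset₀]
    · exact measure_mono (Set.iUnion₂_subset fun T hT => (hAsub T hT).trans Set.inter_subset_right)
    · intro S hS T hT hST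
      refine measure_mono_null (Set.inter_subset_inter ((hAsub S hS).trans Set.inter_subset_left)
        ((hAsub T hT).trans Set.inter_subset_left)) (hdis S hS T hT hST)
    · exact fun T _ => (hAc T).measurableSet.nullMeasurableSet
  have hr := ENNReal.toReal_mono measure_closedBall_lt_top.ne hsum
  rw [volume_closedBall_toReal _ hε0.le, ENNReal.toReal_sum
    (fun T _ => (hAc T).measure_lt_top.ne)] at hr
  have h3 : (𝒮.card : ℝ) * (ε ^ n / M) ≤ ε ^ n * ballVol n := by
    refine le_trans ?_ hr
    rw [← nsmul_eq_mul]
    exact Finset.card_nsmul_le_sum _ _ _ hAvol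
  have h2 : 0 < ε ^ n := by positivity
  rw [mul_div_assoc', div_le_iff₀ hM0] at h3
  have h4 : (𝒮.card : ℝ) * ε ^ n ≤ (M * ballVol n) * ε ^ n := by linarith
  exact le_of_mul_le_mul_right h4 h2

end

section

/-! ### Poincaré and trace inequalities on convex sets -/

variable {n : ℕ}

lemma enorm_sub_le_segment {u : EuclideanSpace ℝ (Fin n) → ℝ} (hu : ContDiff ℝ 1 u)
    (x d : EuclideanSpace ℝ (Fin n)) {a b : ℝ} (hab : a ≤ b) :
    ‖u (x + b • d) - u (x + a • d)‖ₑ ≤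
      ∫⁻ t in Set.Icc a b, ‖fderiv ℝ u (x + t • d)‖ₑ * ‖d‖ₑ := by
  have hl : ∀ t : ℝ, HasDerivAt (fun t : ℝ => x + t • d) d t := fun t => by
    simpa using ((hasDerivAt_id t).smul_const d).const_add x
  have hder : ∀ t : ℝ, HasDerivAt (fun t : ℝ => u (x + t • d)) (fderiv ℝ u (x + t • d) d) t :=
    fun t => ((hu.differentiable one_ne_zero _).hasFDerivAt).comp_hasDerivAt t (hl t)
  have hc : ContDiff ℝ 1 (fun t : ℝ => u (x + t • d)) :=
    hu.comp (contDiff_const.add (contDiff_id.smul contDiff_const))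
  have h1 := enorm_sub_le_lintegral_deriv_of_contDiffOn_Icc (f := fun t : ℝ => u (x + t • d))
    hc.contDiffOn hab
  refine h1.trans (lintegral_mono fun t => ?_)
  rw [(hder t).deriv]
  exact ContinuousLinearMap.le_opENorm _ _

/-- Integrating a function composed with a homothety of ratio `c`. -/
lemma lintegral_homothety (g : EuclideanSpace ℝ (Fin n) → ENNReal) (hg : Measurable g)
    (y : EuclideanSpace ℝ (Fin n)) {c : ℝ} (hc : 0 < c) :
    ∫⁻ x, g (y + c • (x - y)) = ENNReal.ofReal ((c ^ n)⁻¹) * ∫⁻ x, g x := by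
  have h1 : ∫⁻ x, g (y + c • (x - y)) = ∫⁻ x, g (y + c • x) :=
    lintegral_sub_right_eq_self (fun x => g (y + c • x)) y
  have h2 : ∫⁻ x, g (y + c • x) = ∫⁻ x, g (y + x) ∂(Measure.map (c • ·) volume) := by
    rw [lintegral_map (by fun_prop) (by fun_prop)]
  rw [h1, h2, Measure.map_addHaar_smul _ hc.ne', lintegral_smul_measure,
    lintegral_add_left_eq_self g y, finrank_euclideanSpace, Fintype.card_fin,
    abs_of_nonneg (by positivity), smul_eq_mul]

section
variable {u : EuclideanSpace ℝ (Fin n) → ℝ} {T : Set (EuclideanSpace ℝ (Fin n))} {h : ℝ}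

lemma enorm_sub_le_of_dist (hd : ∀ x ∈ T, ∀ y ∈ T, dist x y ≤ h) {x y : EuclideanSpace ℝ (Fin n)}
    (hx : x ∈ T) (hy : y ∈ T) : ‖x - y‖ₑ ≤ ENNReal.ofReal h := by
  rw [← ofReal_norm, ← dist_eq_norm]
  exact ENNReal.ofReal_le_ofReal (hd x hx y hy)

/-- Deviation of `u` from its values at midpoints with a fixed point `y`. -/
lemma lintegral_sub_midpoint_le (hu : ContDiff ℝ 1 u) (hT : Convex ℝ T) (hTm : MeasurableSet T)
    (hd : ∀ x ∈ T, ∀ y ∈ T, dist x y ≤ h) {y : EuclideanSpace ℝ (Fin n)} (hy : y ∈ T) :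
    ∫⁻ x in T, ‖u x - u ((1 / 2 : ℝ) • (x + y))‖ₑ ≤
      2 ^ n * ENNReal.ofReal h * ∫⁻ x in T, ‖fderiv ℝ u x‖ₑ := by
  set f : EuclideanSpace ℝ (Fin n) → ENNReal := fun z => ‖fderiv ℝ u z‖ₑ with hf
  have hfm : Measurable f := (measurable_fderiv ℝ u).enorm
  set g := T.indicator f with hg
  have hgm : Measurable g := hfm.indicator hTm
  have hI : ∫⁻ x, g x = ∫⁻ x in T, f x := lintegral_indicator hTm _
  have hpt : ∀ x ∈ T, ‖u x - u ((1 / 2 : ℝ) • (x + y))‖ₑ ≤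
      ∫⁻ t in Set.Icc (0 : ℝ) (1 / 2), g (y + (1 - t) • (x - y)) * ENNReal.ofReal h := by
    intro x hx
    have h1 := enorm_sub_le_segment hu x (y - x) (a := 0) (b := 1 / 2) (by norm_num)
    have e1 : x + (1 / 2 : ℝ) • (y - x) = (1 / 2 : ℝ) • (x + y) := by
      module
    rw [e1, zero_smul, add_zero, ← enorm_neg, neg_sub] at h1
    refine h1.trans (setLIntegral_mono' measurableSet_Icc fun t ht => ?_)
    have e2 : x + t • (y - x) = y + (1 - t) • (x - y) := by module
    have hmem : y + (1 - t) • (x - y) ∈ T := by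
      rw [← e2]
      exact hT.add_smul_sub_mem hx hy ⟨ht.1, by linarith [ht.2]⟩
    rw [e2, hg, Set.indicator_of_mem hmem]
    gcongr
    exact enorm_sub_le_of_dist hd hy hx
  calc ∫⁻ x in T, ‖u x - u ((1 / 2 : ℝ) • (x + y))‖ₑ
      ≤ ∫⁻ x in T, ∫⁻ t in Set.Icc (0 : ℝ) (1 / 2),
          g (y + (1 - t) • (x - y)) * ENNReal.ofReal h :=
        setLIntegral_mono' hTm hpt
    _ ≤ ∫⁻ x, ∫⁻ t in Set.Icc (0 : ℝ) (1 / 2),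
          g (y + (1 - t) • (x - y)) * ENNReal.ofReal h := setLIntegral_le_lintegral _ _
    _ = ∫⁻ t in Set.Icc (0 : ℝ) (1 / 2), ∫⁻ x,
          g (y + (1 - t) • (x - y)) * ENNReal.ofReal h := by
        refine lintegral_lintegral_swap (Measurable.aemeasurable ?_)
        refine Measurable.mul_const (hgm.comp ?_) _
        fun_prop
    _ ≤ ∫⁻ t in Set.Icc (0 : ℝ) (1 / 2), 2 ^ n * (∫⁻ x in T, f x) * ENNReal.ofReal h := by
        refine setLIntegral_mono' measurableSet_Icc fun t ht => ?_
        have ht1 : (1 / 2 : ℝ) ≤ 1 - t := by linarith [ht.2]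
        rw [lintegral_mul_const _ (by fun_prop), lintegral_homothety g hgm y (by linarith), hI]
        gcongr
        have : (2 : ENNReal) ^ n = ENNReal.ofReal (2 ^ n) := by
          rw [ENNReal.ofReal_pow (by norm_num)]; simp
        rw [this]
        refine ENNReal.ofReal_le_ofReal ?_
        rw [← inv_pow]
        refine pow_le_pow_left₀ (by positivity) ?_ n
        rw [inv_le_comm₀ (by linarith) (by norm_num)]
        linarith
    _ ≤ 2 ^ n * (∫⁻ x in T, f x) * ENNReal.ofReal h * 1 := by
        rw [setLIntegral_const]
        gcongr
        rw [Real.volume_Icc]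
        simp
    _ = _ := by ring

/-- Poincaré's inequality in `L¹` on a convex set, with a point value in place of the mean. -/
lemma poincare (hu : ContDiff ℝ 1 u) (hT : Convex ℝ T) (hTm : MeasurableSet T)
    (hd : ∀ x ∈ T, ∀ y ∈ T, dist x y ≤ h) (h0 : volume T ≠ 0) (htop : volume T ≠ ⊤) :
    ∃ y ∈ T, ∫⁻ x in T, ‖u x - u y‖ₑ ≤
      2 ^ (n + 1) * ENNReal.ofReal h * ∫⁻ x in T, ‖fderiv ℝ u x‖ₑ := by
  set C := 2 ^ n * ENNReal.ofReal h * ∫⁻ x in T, ‖fderiv ℝ u x‖ₑ with hC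
  have huc : Continuous u := hu.continuous
  have hmeas : Measurable (fun y => ∫⁻ x in T, ‖u x - u y‖ₑ) := by
    refine Measurable.lintegral_prod_left' (f := fun p : _ × _ => ‖u p.1 - u p.2‖ₑ) ?_
    have : Continuous (fun p : EuclideanSpace ℝ (Fin n) × EuclideanSpace ℝ (Fin n) =>
      ‖u p.1 - u p.2‖ₑ) := by fun_prop
    exact this.measurable
  obtain ⟨y, hyT, hy⟩ := exists_le_setLAverage (μ := volume) h0 htop hmeas.aemeasurable
  refine ⟨y, hyT, hy.trans ?_⟩
  rw [setLAverage_eq]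
  refine ENNReal.div_le_of_le_mul ?_
  calc ∫⁻ y in T, ∫⁻ x in T, ‖u x - u y‖ₑ
      ≤ ∫⁻ y in T, ∫⁻ x in T, (‖u x - u ((1 / 2 : ℝ) • (x + y))‖ₑ +
          ‖u y - u ((1 / 2 : ℝ) • (x + y))‖ₑ) := by
        refine lintegral_mono fun y => lintegral_mono fun x => ?_
        calc ‖u x - u y‖ₑ = ‖(u x - u ((1 / 2 : ℝ) • (x + y))) -
              (u y - u ((1 / 2 : ℝ) • (x + y)))‖ₑ := by congr 1; ring
          _ ≤ _ := enorm_sub_le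
    _ = (∫⁻ y in T, ∫⁻ x in T, ‖u x - u ((1 / 2 : ℝ) • (x + y))‖ₑ) +
        ∫⁻ y in T, ∫⁻ x in T, ‖u y - u ((1 / 2 : ℝ) • (x + y))‖ₑ := by
        have m1 : Measurable (fun p : EuclideanSpace ℝ (Fin n) × EuclideanSpace ℝ (Fin n) =>
            ‖u p.2 - u ((1 / 2 : ℝ) • (p.2 + p.1))‖ₑ) := by
          refine Continuous.measurable ?_
          fun_prop
        rw [← lintegral_add_left]
        · refine lintegral_congr fun y => ?_
          rw [lintegral_add_left]
          exact m1.comp measurable_prodMk_left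
        · exact m1.lintegral_prod_right'
    _ = (∫⁻ y in T, ∫⁻ x in T, ‖u x - u ((1 / 2 : ℝ) • (x + y))‖ₑ) +
        ∫⁻ x in T, ∫⁻ y in T, ‖u y - u ((1 / 2 : ℝ) • (x + y))‖ₑ := by
        congr 1
        refine lintegral_lintegral_swap (Measurable.aemeasurable ?_)
        refine Continuous.measurable ?_
        fun_prop
    _ ≤ (∫⁻ y in T, C) + ∫⁻ x in T, C := by
        refine add_le_add (setLIntegral_mono' hTm fun y hy => ?_)
          (setLIntegral_mono' hTm fun x hx => ?_)
        · exact lintegral_sub_midpoint_le hu hT hTm hd hy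
        · simp_rw [add_comm x]
          exact lintegral_sub_midpoint_le hu hT hTm hd hx
    _ = 2 ^ (n + 1) * ENNReal.ofReal h * (∫⁻ x in T, ‖fderiv ℝ u x‖ₑ) * volume T := by
        rw [setLIntegral_const, hC]
        ring

/-- A trace inequality: the values of `u` at the radial projections `a + s(z)⁻¹ (z - a)` of the
points `z ∈ Z` from an apex `a` are controlled by `u` and its gradient on `T`. -/
lemma trace_le (hu : ContDiff ℝ 1 u) (hT : Convex ℝ T) (hTm : MeasurableSet T)
    (hd : ∀ x ∈ T, ∀ y ∈ T, dist x y ≤ h) {a : EuclideanSpace ℝ (Fin n)} (ha : a ∈ T)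
    {Z : Set (EuclideanSpace ℝ (Fin n))} (hZm : MeasurableSet Z) (hZ : Z ⊆ T)
    (s : EuclideanSpace ℝ (Fin n) → ℝ) (hs : ∀ z ∈ Z, 1 / 2 ≤ s z ∧ s z ≤ 1)
    (hsT : ∀ z ∈ Z, a + (s z)⁻¹ • (z - a) ∈ T) :
    ∫⁻ z in Z, ‖u (a + (s z)⁻¹ • (z - a))‖ₑ ≤
      (∫⁻ z in T, ‖u z‖ₑ) + ENNReal.ofReal h * ∫⁻ x in T, ‖fderiv ℝ u x‖ₑ := by
  set f : EuclideanSpace ℝ (Fin n) → ENNReal := fun z => ‖fderiv ℝ u z‖ₑ with hf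
  have hfm : Measurable f := (measurable_fderiv ℝ u).enorm
  set g := T.indicator f with hg
  have hgm : Measurable g := hfm.indicator hTm
  have hI : ∫⁻ x, g x = ∫⁻ x in T, f x := lintegral_indicator hTm _
  have hpt : ∀ z ∈ Z, ‖u (a + (s z)⁻¹ • (z - a))‖ₑ ≤ ‖u z‖ₑ +
      ∫⁻ t in Set.Icc (1 : ℝ) 2, g (a + t • (z - a)) * ENNReal.ofReal h := by
    intro z hz
    obtain ⟨hs1, hs2⟩ := hs z hz
    have hs0 : 0 < s z := by linarith
    have hi1 : 1 ≤ (s z)⁻¹ := (one_le_inv₀ hs0).2 hs2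
    have hi2 : (s z)⁻¹ ≤ 2 := by
      rw [inv_le_comm₀ hs0 (by norm_num)]; linarith
    have h1 := enorm_sub_le_segment hu a (z - a) (a := 1) (b := (s z)⁻¹) hi1
    rw [one_smul, add_sub_cancel] at h1
    calc ‖u (a + (s z)⁻¹ • (z - a))‖ₑ
        = ‖u z + (u (a + (s z)⁻¹ • (z - a)) - u z)‖ₑ := by congr 1; ring
      _ ≤ ‖u z‖ₑ + ‖u (a + (s z)⁻¹ • (z - a)) - u z‖ₑ := enorm_add_le _ _
      _ ≤ _ := by
        gcongr
        refine h1.trans ?_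
        calc _ ≤ ∫⁻ t in Set.Icc (1 : ℝ) (s z)⁻¹, g (a + t • (z - a)) * ENNReal.ofReal h := by
              refine setLIntegral_mono' measurableSet_Icc fun t ht => ?_
              have hmem : a + t • (z - a) ∈ T := by
                have := hT.add_smul_sub_mem ha (hsT z hz) (t := t * s z)
                  ⟨by nlinarith [ht.1], by
                    have := ht.2
                    rwa [le_inv_comm₀ (by linarith [ht.1]) hs0, ← one_div,
                      le_div_iff₀ (by linarith [ht.1]), mul_comm] at this⟩
                have e : (t * s z) • (a + (s z)⁻¹ • (z - a) - a) = t • (z - a) := by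
                  rw [add_sub_cancel_left, smul_smul, mul_assoc, mul_inv_cancel₀ hs0.ne', mul_one]
                rwa [e] at this
              rw [hg, Set.indicator_of_mem hmem]
              gcongr
              exact enorm_sub_le_of_dist hd (hZ hz) ha
          _ ≤ _ := lintegral_mono_set (Set.Icc_subset_Icc_right hi2)
  have hmeas2 : Measurable (fun p : EuclideanSpace ℝ (Fin n) × ℝ =>
      g (a + p.2 • (p.1 - a)) * ENNReal.ofReal h) :=
    Measurable.mul_const (hgm.comp (by fun_prop)) _
  calc ∫⁻ z in Z, ‖u (a + (s z)⁻¹ • (z - a))‖ₑ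
      ≤ ∫⁻ z in Z, (‖u z‖ₑ +
        ∫⁻ t in Set.Icc (1 : ℝ) 2, g (a + t • (z - a)) * ENNReal.ofReal h) :=
        setLIntegral_mono' hZm hpt
    _ = (∫⁻ z in Z, ‖u z‖ₑ) + ∫⁻ z in Z,
        ∫⁻ t in Set.Icc (1 : ℝ) 2, g (a + t • (z - a)) * ENNReal.ofReal h := by
        rw [lintegral_add_left]
        exact (hu.continuous.enorm).measurable
    _ ≤ (∫⁻ z in T, ‖u z‖ₑ) + ∫⁻ z,
        ∫⁻ t in Set.Icc (1 : ℝ) 2, g (a + t • (z - a)) * ENNReal.ofReal h :=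
        add_le_add (lintegral_mono_set hZ) (setLIntegral_le_lintegral _ _)
    _ = (∫⁻ z in T, ‖u z‖ₑ) + ∫⁻ t in Set.Icc (1 : ℝ) 2,
        ∫⁻ z, g (a + t • (z - a)) * ENNReal.ofReal h := by
        congr 1
        exact lintegral_lintegral_swap
          (f := fun z t => g (a + t • (z - a)) * ENNReal.ofReal h) hmeas2.aemeasurable
    _ ≤ (∫⁻ z in T, ‖u z‖ₑ) + ∫⁻ t in Set.Icc (1 : ℝ) 2,
        (∫⁻ x in T, f x) * ENNReal.ofReal h := by
        gcongr 1
        refine setLIntegral_mono' measurableSet_Icc fun t ht => ?_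
        rw [lintegral_mul_const _ (by fun_prop), lintegral_homothety g hgm a (by linarith [ht.1]),
          hI]
        gcongr
        refine mul_le_of_le_one_left' ?_
        rw [ENNReal.ofReal_le_one]
        exact inv_le_one_of_one_le₀ (one_le_pow₀ ht.1)
    _ = _ := by
        rw [setLIntegral_const, Real.volume_Icc]
        norm_num
        ring

end

end

section

/-! ### Polynomials in barycentric coordinates -/

variable {n : ℕ}

/-- The homogeneous form of degree `r` that represents the polynomial `q` (of degree at most `r`)
in barycentric coordinates with respect to `T`: the coordinate `yᵢ` becomes `∑ xᵢ X_x` and each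
missing degree is filled up with a factor `∑ X_x`, which is `1` on barycentric coordinates.  The
variables are indexed by all points of `ℝⁿ`, so forms for different simplices can be compared. -/
noncomputable def homog (T : Finset (EuclideanSpace ℝ (Fin n))) (r : ℕ)
    (q : MvPolynomial (Fin n) ℝ) : MvPolynomial (EuclideanSpace ℝ (Fin n)) ℝ :=
  ∑ γ ∈ q.support, MvPolynomial.C (q.coeff γ) *
    ((∏ i, (∑ x ∈ T, MvPolynomial.C (x i) * MvPolynomial.X x) ^ (γ i)) *
      (∑ x ∈ T, MvPolynomial.X x) ^ (r - ∑ i, γ i))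

lemma homog_isHomogeneous (T : Finset (EuclideanSpace ℝ (Fin n))) {r : ℕ}
    {q : MvPolynomial (Fin n) ℝ} (hq : q.totalDegree ≤ r) : (homog T r q).IsHomogeneous r := by
  refine MvPolynomial.IsHomogeneous.sum _ _ _ fun γ hγ => ?_
  have hdeg : ∑ i, γ i ≤ r := by
    refine le_trans ?_ hq
    have := MvPolynomial.le_totalDegree hγ
    rwa [Finsupp.sum_fintype _ _ (fun _ => rfl)] at this
  have h1 : (∏ i, (∑ x ∈ T, MvPolynomial.C (σ := EuclideanSpace ℝ (Fin n)) (x i) *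
      MvPolynomial.X x) ^ (γ i)).IsHomogeneous (∑ i, γ i) := by
    refine MvPolynomial.IsHomogeneous.prod _ _ _ fun i _ => ?_
    have : (∑ x ∈ T, MvPolynomial.C (σ := EuclideanSpace ℝ (Fin n)) (x i) *
      MvPolynomial.X x).IsHomogeneous 1 :=
      MvPolynomial.IsHomogeneous.sum _ _ _ fun x _ => MvPolynomial.isHomogeneous_C_mul_X _ _
    simpa using this.pow (γ i)
  have h2 : ((∑ x ∈ T, MvPolynomial.X (R := ℝ) x) ^ (r - ∑ i, γ i)).IsHomogeneous
      (r - ∑ i, γ i) := by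
    have : (∑ x ∈ T, MvPolynomial.X (R := ℝ) x).IsHomogeneous 1 :=
      MvPolynomial.IsHomogeneous.sum _ _ _ fun x _ => MvPolynomial.isHomogeneous_X _ _
    simpa using this.pow (r - ∑ i, γ i)
  have h3 := (MvPolynomial.isHomogeneous_C (EuclideanSpace ℝ (Fin n)) (q.coeff γ)).mul (h1.mul h2)
  rwa [zero_add, Nat.add_sub_cancel' hdeg] at h3

lemma eval_homog (T : Finset (EuclideanSpace ℝ (Fin n))) (r : ℕ)
    (q : MvPolynomial (Fin n) ℝ) (Λ : EuclideanSpace ℝ (Fin n) → ℝ) (hΛ : ∑ x ∈ T, Λ x = 1) :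
    MvPolynomial.eval Λ (homog T r q) =
      MvPolynomial.eval (fun i => (∑ x ∈ T, Λ x • x) i) q := by
  rw [MvPolynomial.eval_eq' (fun i => (∑ x ∈ T, Λ x • x) i) q]
  simp only [homog, map_sum, map_mul, map_prod, map_pow, MvPolynomial.eval_C, MvPolynomial.eval_X,
    hΛ, one_pow, mul_one]
  refine Finset.sum_congr rfl fun γ _ => ?_
  congr 1
  refine Finset.prod_congr rfl fun i _ => ?_
  congr 1
  simp [mul_comm]

/-- A form evaluated at a point supported on `T` only sees the monomials in the variables of `T`. -/
lemma eval_of_isHomogeneous {r : ℕ} {P : MvPolynomial (EuclideanSpace ℝ (Fin n)) ℝ}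
    (hP : P.IsHomogeneous r) (T : Finset (EuclideanSpace ℝ (Fin n)))
    (Λ : EuclideanSpace ℝ (Fin n) → ℝ) (hΛ : ∀ x, x ∉ T → Λ x = 0) :
    MvPolynomial.eval Λ P =
      ∑ α ∈ Finset.finsuppAntidiag T r, P.coeff α * ∏ x ∈ T, Λ x ^ (α x) := by
  have hsub : ∀ α : EuclideanSpace ℝ (Fin n) →₀ ℕ, α.support ⊆ T →
      ∏ x ∈ α.support, Λ x ^ α x = ∏ x ∈ T, Λ x ^ α x := by
    intro α hα
    refine Finset.prod_subset hα fun x _ hx => ?_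
    rw [Finsupp.notMem_support_iff.1 hx, pow_zero]
  rw [MvPolynomial.eval_eq]
  have h1 : ∑ α ∈ P.support, P.coeff α * ∏ x ∈ α.support, Λ x ^ α x =
      ∑ α ∈ P.support.filter (fun α => α.support ⊆ T),
        P.coeff α * ∏ x ∈ α.support, Λ x ^ α x := by
    symm
    refine Finset.sum_filter_of_ne fun α _ hne => ?_
    by_contra hns
    obtain ⟨x, hx, hxT⟩ := Finset.not_subset.1 hns
    refine hne ?_
    rw [Finset.prod_eq_zero hx, mul_zero]
    rw [hΛ x hxT, zero_pow (Finsupp.mem_support_iff.1 hx)]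
  rw [h1]
  refine Finset.sum_subset_zero_on_sdiff ?_ ?_ ?_
  · intro α hα
    rw [Finset.mem_filter] at hα
    rw [Finset.mem_finsuppAntidiag]
    refine ⟨?_, hα.2⟩
    have hd := hP (MvPolynomial.mem_support_iff.1 hα.1)
    rw [← Finset.sum_subset hα.2 (fun x _ hx => Finsupp.notMem_support_iff.1 hx)]
    simpa [Finsupp.weight_apply, Finsupp.sum] using hd
  · intro α hα
    rw [Finset.mem_sdiff, Finset.mem_finsuppAntidiag, Finset.mem_filter] at hα
    have : α ∉ P.support := fun h => hα.2 ⟨h, hα.1.2⟩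
    rw [MvPolynomial.notMem_support_iff.1 this, zero_mul]
  · intro α hα
    rw [Finset.mem_filter] at hα
    rw [hsub α hα.2]

/-- The polynomial in Cartesian coordinates that represents an affine function. -/
noncomputable def affPoly (ℓ : EuclideanSpace ℝ (Fin n) →ᵃ[ℝ] ℝ) : MvPolynomial (Fin n) ℝ :=
  MvPolynomial.C (ℓ 0) +
    ∑ i, MvPolynomial.C (ℓ.linear (EuclideanSpace.single i 1)) * MvPolynomial.X i

lemma affPoly_totalDegree (ℓ : EuclideanSpace ℝ (Fin n) →ᵃ[ℝ] ℝ) :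
    (affPoly ℓ).totalDegree ≤ 1 := by
  refine (MvPolynomial.totalDegree_add _ _).trans (max_le (by simp) ?_)
  refine MvPolynomial.totalDegree_finsetSum_le fun i _ => ?_
  refine (MvPolynomial.totalDegree_mul _ _).trans ?_
  simp

lemma eval_affPoly (ℓ : EuclideanSpace ℝ (Fin n) →ᵃ[ℝ] ℝ) (y : EuclideanSpace ℝ (Fin n)) :
    MvPolynomial.eval (fun i => y i) (affPoly ℓ) = ℓ y := by
  have h1 : ℓ y = ℓ.linear y + ℓ 0 := by
    have := congrFun (AffineMap.decomp ℓ) y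
    simpa using this
  have h2 : y = ∑ i, y i • EuclideanSpace.single i (1 : ℝ) := by
    have := (EuclideanSpace.basisFun (Fin n) ℝ).sum_repr y
    simpa using this.symm
  rw [h1]
  conv_rhs => rw [h2]
  simp [affPoly, mul_comm, add_comm]

/-- The polynomial in Cartesian coordinates with prescribed coefficients with respect to the
monomials of degree `r` in the barycentric coordinates `β` of `T`. -/
noncomputable def baryPoly (T : Finset (EuclideanSpace ℝ (Fin n))) (r : ℕ)
    (β : EuclideanSpace ℝ (Fin n) → (EuclideanSpace ℝ (Fin n) →ᵃ[ℝ] ℝ))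
    (d : (EuclideanSpace ℝ (Fin n) →₀ ℕ) → ℝ) : MvPolynomial (Fin n) ℝ :=
  ∑ α ∈ Finset.finsuppAntidiag T r, MvPolynomial.C (d α) * ∏ x ∈ T, affPoly (β x) ^ α x

lemma baryPoly_totalDegree (T : Finset (EuclideanSpace ℝ (Fin n))) (r : ℕ)
    (β : EuclideanSpace ℝ (Fin n) → (EuclideanSpace ℝ (Fin n) →ᵃ[ℝ] ℝ))
    (d : (EuclideanSpace ℝ (Fin n) →₀ ℕ) → ℝ) : (baryPoly T r β d).totalDegree ≤ r := by
  refine MvPolynomial.totalDegree_finsetSum_le fun α hα => ?_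
  rw [Finset.mem_finsuppAntidiag] at hα
  refine (MvPolynomial.totalDegree_mul _ _).trans ?_
  rw [MvPolynomial.totalDegree_C, zero_add, ← hα.1]
  refine (MvPolynomial.totalDegree_finsetProd _ _).trans (Finset.sum_le_sum fun x _ => ?_)
  refine (MvPolynomial.totalDegree_pow _ _).trans ?_
  exact mul_le_of_le_one_right (Nat.zero_le _) (affPoly_totalDegree _)

lemma eval_baryPoly (T : Finset (EuclideanSpace ℝ (Fin n))) (r : ℕ)
    (β : EuclideanSpace ℝ (Fin n) → (EuclideanSpace ℝ (Fin n) →ᵃ[ℝ] ℝ))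
    (d : (EuclideanSpace ℝ (Fin n) →₀ ℕ) → ℝ) (y : EuclideanSpace ℝ (Fin n)) :
    MvPolynomial.eval (fun i => y i) (baryPoly T r β d) =
      ∑ α ∈ Finset.finsuppAntidiag T r, d α * ∏ x ∈ T, β x y ^ α x := by
  simp [baryPoly, eval_affPoly]

lemma contDiff_eval (q : MvPolynomial (Fin n) ℝ) :
    ContDiff ℝ 1 (fun z : EuclideanSpace ℝ (Fin n) => MvPolynomial.eval (fun i => z i) q) := by
  simp only [MvPolynomial.eval_eq']
  refine ContDiff.sum fun d _ => contDiff_const.mul (contDiff_prod fun i _ => ContDiff.pow ?_ _)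
  exact (EuclideanSpace.proj (𝕜 := ℝ) i).contDiff

/-! ### The gradient of a form in barycentric coordinates -/

section
variable {T : Finset (EuclideanSpace ℝ (Fin n))}
  {β : EuclideanSpace ℝ (Fin n) → (EuclideanSpace ℝ (Fin n) →ᵃ[ℝ] ℝ)}

lemma hasFDerivAt_affine (ℓ : EuclideanSpace ℝ (Fin n) →ᵃ[ℝ] ℝ) (y : EuclideanSpace ℝ (Fin n)) :
    HasFDerivAt (fun y => ℓ y) (LinearMap.toContinuousLinearMap ℓ.linear) y := by
  have h1 : (fun y => ℓ y) = fun y => LinearMap.toContinuousLinearMap ℓ.linear y + ℓ 0 := by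
    funext y
    have := congrFun (AffineMap.decomp ℓ) y
    simpa using this
  rw [h1]
  exact (ContinuousLinearMap.hasFDerivAt _).add_const _

lemma IsBary.monomial_deriv (h : IsBary T β) {L : ℝ} (hL0 : 0 ≤ L)
    (hL : ∀ x z, |(β x).linear z| ≤ L * ‖z‖) {y : EuclideanSpace ℝ (Fin n)} (hy : y ∈ hull T)
    (α : EuclideanSpace ℝ (Fin n) → ℕ) (S : Finset (EuclideanSpace ℝ (Fin n))) :
    ∃ A : EuclideanSpace ℝ (Fin n) →L[ℝ] ℝ,
      HasFDerivAt (fun y => ∏ x ∈ S, β x y ^ α x) A y ∧ ‖A‖ ≤ (∑ x ∈ S, α x : ℕ) * L := by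
  induction S using Finset.induction_on with
  | empty => exact ⟨0, by simpa using hasFDerivAt_const (1 : ℝ) y, by simp⟩
  | insert x S hx ih =>
    obtain ⟨A, hA, hAn⟩ := ih
    have h1 : HasFDerivAt (fun y => β x y ^ α x) _ y := (hasFDerivAt_affine (β x) y).pow (α x)
    have h2 := h1.fun_mul hA
    refine ⟨_, by simpa only [Finset.prod_insert hx] using h2, ?_⟩
    have b0 := h.nonneg hy x
    have b1 := h.le_one hy x
    have p1 : |∏ x ∈ S, β x y ^ α x| ≤ 1 := by
      rw [abs_of_nonneg (Finset.prod_nonneg fun z _ => pow_nonneg (h.nonneg hy z) _)]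
      exact Finset.prod_le_one (fun z _ => pow_nonneg (h.nonneg hy z) _)
        fun z _ => pow_le_one₀ (h.nonneg hy z) (h.le_one hy z)
    have nL : ‖LinearMap.toContinuousLinearMap (β x).linear‖ ≤ L :=
      ContinuousLinearMap.opNorm_le_bound _ hL0 fun z => by simpa using hL x z
    have q1 : |β x y ^ α x| ≤ 1 := by
      rw [abs_of_nonneg (pow_nonneg b0 _)]; exact pow_le_one₀ b0 b1
    have q2 : |β x y ^ (α x - 1)| ≤ 1 := by
      rw [abs_of_nonneg (pow_nonneg b0 _)]; exact pow_le_one₀ b0 b1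
    rw [Finset.sum_insert hx]
    push_cast
    rw [add_mul, add_comm ((α x : ℝ) * L)]
    refine (norm_add_le _ _).trans (add_le_add ?_ ?_)
    · rw [norm_smul, Real.norm_eq_abs]
      push_cast at hAn
      calc _ ≤ 1 * ‖A‖ := by gcongr
        _ ≤ _ := by rw [one_mul]; exact hAn
    · rw [norm_smul, Real.norm_eq_abs]
      calc _ ≤ 1 * (α x * L) := by
            gcongr
            rw [norm_smul]
            have : ‖(α x • β x y ^ (α x - 1) : ℝ)‖ ≤ α x := by
              rw [nsmul_eq_mul, norm_mul, Real.norm_eq_abs, Real.norm_eq_abs, Nat.abs_cast]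
              exact mul_le_of_le_one_right (by positivity) q2
            gcongr
        _ = _ := one_mul _

lemma IsBary.form_deriv (h : IsBary T β) {L : ℝ} (hL0 : 0 ≤ L)
    (hL : ∀ x z, |(β x).linear z| ≤ L * ‖z‖) {y : EuclideanSpace ℝ (Fin n)} (hy : y ∈ hull T)
    {r : ℕ} (d : (EuclideanSpace ℝ (Fin n) →₀ ℕ) → ℝ) {δ : ℝ}
    (hd : ∀ α ∈ Finset.finsuppAntidiag T r, |d α| ≤ δ) :
    ‖fderiv ℝ (fun y => ∑ α ∈ Finset.finsuppAntidiag T r, d α * ∏ x ∈ T, β x y ^ α x) y‖ ≤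
      (Nat.choose (n + r) r) * (δ * (r * L)) := by
  have hm := fun α : EuclideanSpace ℝ (Fin n) →₀ ℕ => h.monomial_deriv hL0 hL hy α T
  choose A hA hAn using hm
  have hsum : HasFDerivAt
      (fun y => ∑ α ∈ Finset.finsuppAntidiag T r, d α * ∏ x ∈ T, β x y ^ α x)
      (∑ α ∈ Finset.finsuppAntidiag T r, d α • A α) y :=
    HasFDerivAt.fun_sum fun α _ => (hA α).const_mul (d α)
  rw [hsum.fderiv]
  have hcard : (Finset.finsuppAntidiag T r).card = Nat.choose (n + r) r := by
    rw [Finset.card_finsuppAntidiag_nat_eq_choose, h.card]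
    congr 1; omega
  refine (norm_sum_le _ _).trans ?_
  rw [← hcard, ← nsmul_eq_mul]
  refine Finset.sum_le_card_nsmul _ _ _ fun α hα => ?_
  rw [norm_smul, Real.norm_eq_abs]
  have h1 := hAn α
  rw [(Finset.mem_finsuppAntidiag.1 hα).1] at h1
  exact mul_le_mul (hd α hα) h1 (norm_nonneg _) ((abs_nonneg _).trans (hd α hα))

end

end

section

/-! ### Forms on a box: coefficients are controlled by the mean value -/

variable {n : ℕ}

/-- The box `[1/(2n), 1/n]ⁿ`.  On it the sum of the coordinates lies in `[1/2, 1]`. -/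
def coordBox (n : ℕ) : Set (Fin n → ℝ) :=
  Set.Icc (fun _ => 1 / (2 * (n : ℝ))) (fun _ => 1 / (n : ℝ))

lemma coordBox_bounds (hn : 1 ≤ n) {ω : Fin n → ℝ} (hω : ω ∈ coordBox n) :
    (∀ i, 0 < ω i ∧ ω i ≤ 1) ∧ 1 / 2 ≤ ∑ i, ω i ∧ ∑ i, ω i ≤ 1 := by
  have hn0 : (1 : ℝ) ≤ n := by exact_mod_cast hn
  have h1 : ∀ i, 1 / (2 * (n : ℝ)) ≤ ω i := fun i => hω.1 i
  have h2 : ∀ i, ω i ≤ 1 / (n : ℝ) := fun i => hω.2 i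
  refine ⟨fun i => ⟨lt_of_lt_of_le (by positivity) (h1 i), (h2 i).trans ?_⟩, ?_, ?_⟩
  · rw [div_le_one (by positivity)]; exact hn0
  · have := Finset.card_nsmul_le_sum (Finset.univ : Finset (Fin n)) ω _ fun i _ => h1 i
    rw [Finset.card_univ, Fintype.card_fin, nsmul_eq_mul] at this
    refine le_trans (le_of_eq ?_) this
    field_simp
  · have := Finset.sum_le_card_nsmul (Finset.univ : Finset (Fin n)) ω _ fun i _ => h2 i
    rw [Finset.card_univ, Fintype.card_fin, nsmul_eq_mul] at this
    refine this.trans (le_of_eq ?_)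
    field_simp

/-- All norms on the space of forms of degree `r` in `n` variables are equivalent. -/
lemma exists_form_const (hn : 1 ≤ n) (r : ℕ) : ∃ C : ℝ, 0 < C ∧
    ∀ d : (Fin n →₀ ℕ) → ℝ, ∀ γ ∈ Finset.finsuppAntidiag (Finset.univ : Finset (Fin n)) r,
      |d γ| ≤ C * ∫ ω in coordBox n,
        |∑ γ ∈ Finset.finsuppAntidiag (Finset.univ : Finset (Fin n)) r, d γ * ∏ i, ω i ^ γ i| := by
  have hne : (Finset.finsuppAntidiag (Finset.univ : Finset (Fin n)) r).Nonempty := by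
    refine ⟨Finsupp.single ⟨0, hn⟩ r, ?_⟩
    rw [Finset.mem_finsuppAntidiag]
    simp [Finsupp.single_apply]
  generalize Finset.finsuppAntidiag (Finset.univ : Finset (Fin n)) r = A at hne ⊢
  let G : (A → ℝ) → (Fin n → ℝ) → ℝ := fun d ω => ∑ γ : A, d γ * ∏ i, ω i ^ (γ : Fin n →₀ ℕ) i
  have hG : Continuous (Function.uncurry fun d ω => |G d ω|) := by
    simp only [G, Function.uncurry_def]
    fun_prop
  have hc : IsCompact (coordBox n) := isCompact_Icc
  have hN : Continuous fun d => ∫ ω in coordBox n, |G d ω| :=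
    continuous_parametric_integral_of_continuous hG hc
  have hpos : ∀ d, d ≠ 0 → 0 < ∫ ω in coordBox n, |G d ω| := by
    intro d hd
    have hGd : Continuous fun ω => |G d ω| := hG.comp (by fun_prop : Continuous fun ω => (d, ω))
    refine lt_of_le_of_ne (integral_nonneg fun ω => abs_nonneg _) fun h0 => hd ?_
    have hae := (integral_eq_zero_iff_of_nonneg (fun ω => abs_nonneg (G d ω))
      (hGd.continuousOn.integrableOn_compact hc)).1 h0.symm
    set U : Set (Fin n → ℝ) :=
      Set.pi Set.univ fun _ => Set.Ioo (1 / (2 * (n : ℝ))) (1 / (n : ℝ)) with hU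
    have hUB : U ⊆ coordBox n := fun ω hω =>
      ⟨fun i => (hω i trivial).1.le, fun i => (hω i trivial).2.le⟩
    have hUo : IsOpen U := isOpen_set_pi Set.finite_univ fun _ _ => isOpen_Ioo
    have heq := Measure.eqOn_open_of_ae_eq (μ := volume) (ae_restrict_of_ae_restrict_of_subset hUB hae) hUo
      hGd.continuousOn continuousOn_const
    have hn0 : (0 : ℝ) < n := by exact_mod_cast hn
    have hlt : 1 / (2 * (n : ℝ)) < 1 / (n : ℝ) := by
      apply one_div_lt_one_div_of_lt hn0; linarith
    have hpoly : (∑ γ : A, MvPolynomial.monomial (γ : Fin n →₀ ℕ) (d γ)) = 0 := by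
      refine MvPolynomial.funext_set (fun _ => Set.Ioo (1 / (2 * (n : ℝ))) (1 / (n : ℝ)))
        (fun _ => Set.Ioo_infinite hlt) fun ω hω => ?_
      have := heq hω
      simp only [Pi.zero_apply, abs_eq_zero, G] at this
      rw [map_zero, map_sum, ← this]
      refine Finset.sum_congr rfl fun γ _ => ?_
      rw [MvPolynomial.eval_monomial, Finsupp.prod_fintype _ _ fun i => pow_zero _]
    funext γ
    have := congrArg (MvPolynomial.coeff (γ : Fin n →₀ ℕ)) hpoly
    rw [MvPolynomial.coeff_sum, Finset.sum_eq_single γ] at this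
    · simpa using this
    · intro γ' _ hne
      rw [MvPolynomial.coeff_monomial, if_neg fun h => hne (Subtype.ext h)]
    · simp
  have hAne : Nonempty A := hne.to_subtype
  obtain ⟨d₀, hd₀, hmin⟩ := (isCompact_sphere (0 : A → ℝ) 1).exists_isMinOn
    (NormedSpace.sphere_nonempty.2 zero_le_one) hN.continuousOn
  have hd₀' : d₀ ≠ 0 := by
    intro h; rw [h] at hd₀; simp at hd₀
  set m := ∫ ω in coordBox n, |G d₀ ω| with hm
  have hm0 : 0 < m := hpos d₀ hd₀'
  have key : ∀ d, ‖d‖ ≤ m⁻¹ * ∫ ω in coordBox n, |G d ω| := by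
    intro d
    by_cases hd : d = 0
    · rw [hd, norm_zero]
      exact mul_nonneg (inv_nonneg.2 hm0.le) (integral_nonneg fun ω => abs_nonneg _)
    have hd' : 0 < ‖d‖ := norm_pos_iff.2 hd
    have h1 := hmin (show ‖d‖⁻¹ • d ∈ Metric.sphere (0 : A → ℝ) 1 by
      simp [norm_smul, hd'.ne'])
    have h2 : ∀ ω, |G (‖d‖⁻¹ • d) ω| = ‖d‖⁻¹ * |G d ω| := by
      intro ω
      have : G (‖d‖⁻¹ • d) ω = ‖d‖⁻¹ * G d ω := by
        simp only [G, Finset.mul_sum, Pi.smul_apply, smul_eq_mul, mul_assoc]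
      rw [this, abs_mul, abs_of_nonneg (by positivity)]
    simp only [Set.mem_ofPred_eq, h2, integral_const_mul] at h1
    rw [← hm] at h1
    rw [inv_mul_eq_div, le_div_iff₀ hm0]
    rw [inv_mul_eq_div, le_div_iff₀ hd'] at h1
    linarith
  refine ⟨m⁻¹, inv_pos.2 hm0, fun d γ hγ => ?_⟩
  have h1 := key fun γ => d γ
  have h2 := norm_le_pi_norm (fun γ : A => d γ) ⟨γ, hγ⟩
  have h3 : ∀ ω : Fin n → ℝ, G (fun γ => d γ) ω = ∑ γ ∈ A, d γ * ∏ i, ω i ^ γ i := fun ω =>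
    Finset.sum_coe_sort A fun γ => d γ * ∏ i, ω i ^ γ i
  simp only [h3] at h1
  exact le_trans h2 h1

/-- The estimate of the coefficients of a form by its values on the facet `∑ ωᵢ = 1`, which are
parametrised by the normalised points of the box. -/
lemma exists_form_const_normalized (hn : 1 ≤ n) (r : ℕ) : ∃ C : ℝ, 0 < C ∧
    ∀ d : (Fin n →₀ ℕ) → ℝ, ∀ γ ∈ Finset.finsuppAntidiag (Finset.univ : Finset (Fin n)) r,
      ENNReal.ofReal |d γ| ≤ ENNReal.ofReal C * ∫⁻ ω in coordBox n,
        ‖∑ γ ∈ Finset.finsuppAntidiag (Finset.univ : Finset (Fin n)) r,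
          d γ * ∏ i, (ω i / ∑ j, ω j) ^ γ i‖ₑ := by
  obtain ⟨C, hC, h⟩ := exists_form_const hn r
  refine ⟨C, hC, fun d γ hγ => ?_⟩
  set A := Finset.finsuppAntidiag (Finset.univ : Finset (Fin n)) r with hA
  refine (ENNReal.ofReal_le_ofReal (h d γ hγ)).trans ?_
  rw [ENNReal.ofReal_mul hC.le]
  gcongr
  have hcont : Continuous fun ω : Fin n → ℝ => |∑ γ ∈ A, d γ * ∏ i, ω i ^ γ i| := by fun_prop
  have hc : IsCompact (coordBox n) := isCompact_Icc
  rw [ofReal_integral_eq_lintegral_ofReal (hcont.continuousOn.integrableOn_compact hc)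
    (Filter.Eventually.of_forall fun ω => abs_nonneg _)]
  refine setLIntegral_mono' hc.measurableSet fun ω hω => ?_
  obtain ⟨h1, h2, h3⟩ := coordBox_bounds hn hω
  set s := ∑ j, ω j with hs
  have hs0 : 0 < s := by linarith
  have hhom : ∑ γ ∈ A, d γ * ∏ i, ω i ^ γ i = s ^ r * ∑ γ ∈ A, d γ * ∏ i, (ω i / s) ^ γ i := by
    rw [Finset.mul_sum]
    refine Finset.sum_congr rfl fun γ hγ => ?_
    simp only [div_pow, Finset.prod_div_distrib, Finset.prod_pow_eq_pow_sum]
    rw [(Finset.mem_finsuppAntidiag.1 hγ).1]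
    field_simp
  rw [hhom, ← Real.norm_eq_abs, ofReal_norm, enorm_mul]
  refine mul_le_of_le_one_left (zero_le) ?_
  rw [Real.enorm_eq_ofReal (by positivity)]
  exact ENNReal.ofReal_le_one.2 (pow_le_one₀ hs0.le h3)

end

section

/-! ### Traces on a facet -/

variable {n : ℕ}

section
variable {S : Finset (EuclideanSpace ℝ (Fin n))}
  {β : EuclideanSpace ℝ (Fin n) → (EuclideanSpace ℝ (Fin n) →ᵃ[ℝ] ℝ)}

/-- The coordinates belonging to a facet push Lebesgue measure on `ℝⁿ` forward to a multiple of
Lebesgue measure; the factor is at least the volume of the simplex, because the simplex is mapped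
into the unit cube. -/
lemma IsBary.map_coord (h : IsBary S β) {a : EuclideanSpace ℝ (Fin n)}
    {f : Fin n → EuclideanSpace ℝ (Fin n)} (hS : S = insert a (Finset.univ.image f))
    (ha : a ∉ Finset.univ.image f) :
    ∃ c : NNReal, volume (hull S) ≤ c ∧
      Measure.map (fun z i => β (f i) z) volume = c • (volume : Measure (Fin n → ℝ)) := by
  have hfS : ∀ i, f i ∈ S := fun i => by rw [hS]; simp
  have haS : a ∈ S := by rw [hS]; simp
  have hfa : ∀ i, f i ≠ a := fun i hi => ha (by rw [← hi]; simp)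
  let L : EuclideanSpace ℝ (Fin n) →ₗ[ℝ] (Fin n → ℝ) := LinearMap.pi fun i => (β (f i)).linear
  have hlin : ∀ (ℓ : EuclideanSpace ℝ (Fin n) →ᵃ[ℝ] ℝ) z, ℓ z = ℓ.linear z + ℓ 0 := fun ℓ z => by
    have := congrFun (AffineMap.decomp ℓ) z
    simpa using this
  have hinj : Function.Injective L := by
    rw [injective_iff_map_eq_zero]
    intro z hz
    have h1 : ∀ i, β (f i) (a + z) = 0 := by
      intro i
      have h2 : (β (f i)).linear z = 0 := congrFun hz i
      have h3 : β (f i) a = 0 := by rw [h.vertex haS, if_neg (hfa i)]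
      rw [hlin] at h3 ⊢
      rw [map_add, h2, add_zero, h3]
    have h4 : ∀ x ∈ S, x ≠ a → β x (a + z) = 0 := by
      intro x hx hxa
      rw [hS, Finset.mem_insert, Finset.mem_image] at hx
      rcases hx with hx | ⟨i, _, rfl⟩
      · exact absurd hx hxa
      · exact h1 i
    have h5 := h.sum_one (a + z)
    have h6 := h.comb (a + z)
    rw [Finset.sum_eq_single_of_mem a haS h4] at h5
    rw [Finset.sum_eq_single_of_mem a haS fun x hx hxa => by rw [h4 x hx hxa, zero_smul], h5,
      one_smul] at h6
    simpa using h6.symm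
  let e : EuclideanSpace ℝ (Fin n) ≃L[ℝ] (Fin n → ℝ) :=
    (LinearEquiv.ofInjectiveOfFinrankEq L hinj (by simp)).toContinuousLinearEquiv
  have he : ∀ z, e z = L z := fun z => rfl
  have hmap : Measure.map (fun z i => β (f i) z) volume =
      Measure.map e (volume : Measure (EuclideanSpace ℝ (Fin n))) := by
    have hcomp : (fun z i => β (f i) z) = (fun w => w + fun i => β (f i) 0) ∘ e := by
      funext z i
      simp only [Function.comp, he, L, Pi.add_apply, LinearMap.pi_apply]
      exact hlin _ _
    rw [hcomp, ← Measure.map_map (by fun_prop) e.continuous.measurable, map_add_right_eq_self]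
  obtain ⟨c, hc⟩ : ∃ c : NNReal,
      Measure.map (fun z i => β (f i) z) volume = c • (volume : Measure (Fin n → ℝ)) :=
    ⟨_, hmap.trans (Measure.isAddLeftInvariant_eq_smul (Measure.map e volume) volume)⟩
  refine ⟨c, ?_, hc⟩
  have hm : Measurable fun (z : EuclideanSpace ℝ (Fin n)) (i : Fin n) => β (f i) z :=
    (continuous_pi fun i => (β (f i)).continuous_of_finiteDimensional).measurable
  have h1 : Measure.map (fun z i => β (f i) z) volume (Set.Icc (0 : Fin n → ℝ) 1) = c := by
    rw [hc, Measure.smul_apply, Real.volume_Icc_pi]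
    simp
  rw [← h1, Measure.map_apply hm measurableSet_Icc]
  refine measure_mono fun y hy => ?_
  exact ⟨fun i => h.nonneg hy _, fun i => h.le_one hy _⟩

/-- The mean value over a facet, parametrised by the normalised points of the box, is controlled by
the mean values of the function and its gradient over the simplex. -/
lemma IsBary.facet_trace (h : IsBary S β) (hn : 1 ≤ n) {a : EuclideanSpace ℝ (Fin n)}
    {f : Fin n → EuclideanSpace ℝ (Fin n)} (hf : Function.Injective f)
    (hS : S = insert a (Finset.univ.image f))
    (ha : a ∉ Finset.univ.image f) {u : EuclideanSpace ℝ (Fin n) → ℝ} (hu : ContDiff ℝ 1 u) :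
    volume (hull S) * ∫⁻ ω in coordBox n, ‖u (∑ i, (ω i / ∑ j, ω j) • f i)‖ₑ ≤
      (∫⁻ z in hull S, ‖u z‖ₑ) + ENNReal.ofReal (hdiam S) * ∫⁻ z in hull S, ‖fderiv ℝ u z‖ₑ := by
  obtain ⟨c, hc, hmap⟩ := h.map_coord hS ha
  have hfS : ∀ i, f i ∈ S := fun i => by rw [hS]; simp
  have haS : a ∈ S := by rw [hS]; simp
  have hsum : ∀ {M : Type} [AddCommMonoid M] (g : EuclideanSpace ℝ (Fin n) → M),
      ∑ x ∈ S, g x = g a + ∑ i, g (f i) := by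
    intro M _ g
    rw [hS, Finset.sum_insert ha, Finset.sum_image fun i _ j _ hij => hf hij]
  have hcoord : Continuous fun (z : EuclideanSpace ℝ (Fin n)) (i : Fin n) => β (f i) z :=
    continuous_pi fun i => (β (f i)).continuous_of_finiteDimensional
  set Ψ : EuclideanSpace ℝ (Fin n) → (Fin n → ℝ) := fun z i => β (f i) z with hΨ
  set Z := Ψ ⁻¹' coordBox n with hZ
  have hBm : MeasurableSet (coordBox n) := measurableSet_Icc
  have hZm : MeasurableSet Z := hcoord.measurable hBm
  have hZS : Z ⊆ hull S := by
    intro z hz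
    obtain ⟨h1, h2, h3⟩ := coordBox_bounds hn hz
    rw [h.mem_hull_iff]
    intro x hx
    rw [hS, Finset.mem_insert, Finset.mem_image] at hx
    rcases hx with rfl | ⟨i, _, rfl⟩
    · have := h.sum_one z
      rw [hsum] at this
      have h4 : ∑ i, β (f i) z = ∑ i, Ψ z i := rfl
      linarith
    · exact (h1 i).1.le
  have hpt : ∀ z ∈ Z, ∑ i, (Ψ z i / ∑ j, Ψ z j) • f i = a + (∑ j, Ψ z j)⁻¹ • (z - a) := by
    intro z hz
    obtain ⟨h1, h2, h3⟩ := coordBox_bounds hn hz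
    have hs0 : (∑ j, Ψ z j) ≠ 0 := by linarith
    have e1 : β a z = 1 - ∑ j, Ψ z j := by
      have := h.sum_one z
      rw [hsum] at this
      have h4 : ∑ i, β (f i) z = ∑ i, Ψ z i := rfl
      linarith
    have e2 : z - a = (∑ i, Ψ z i • f i) - (∑ j, Ψ z j) • a := by
      have := h.comb z
      rw [hsum fun x => β x z • x, e1, sub_smul, one_smul] at this
      conv_lhs => rw [← this]
      simp only [hΨ]
      abel
    rw [e2, smul_sub, smul_smul, inv_mul_cancel₀ hs0, one_smul, Finset.smul_sum]
    simp only [smul_smul, div_eq_inv_mul]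
    abel
  have hpS : ∀ z ∈ Z, a + (∑ j, Ψ z j)⁻¹ • (z - a) ∈ hull S := by
    intro z hz
    obtain ⟨h1, h2, h3⟩ := coordBox_bounds hn hz
    have hs0 : 0 < (∑ j, Ψ z j) := by linarith
    rw [← hpt z hz]
    refine (convex_convexHull ℝ _).sum_mem (fun i _ => ?_) ?_ fun i _ =>
      subset_convexHull ℝ _ (hfS i)
    · exact div_nonneg (h1 i).1.le hs0.le
    · rw [← Finset.sum_div, div_self hs0.ne']
  have htr := trace_le hu (convex_convexHull ℝ _) (IsBary.isCompact_hull S).measurableSet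
    (fun x hx y hy => dist_le_hdiam S hx hy) (subset_convexHull ℝ _ haS) hZm hZS
    (fun z => ∑ j, Ψ z j) (fun z hz => (coordBox_bounds hn hz).2) hpS
  refine le_trans ?_ htr
  have hmeas : Measurable fun ω : Fin n → ℝ => ‖u (∑ i, (ω i / ∑ j, ω j) • f i)‖ₑ := by
    refine Measurable.enorm (hu.continuous.measurable.comp ?_)
    fun_prop
  calc volume (hull S) * ∫⁻ ω in coordBox n, ‖u (∑ i, (ω i / ∑ j, ω j) • f i)‖ₑ
      ≤ c * ∫⁻ ω in coordBox n, ‖u (∑ i, (ω i / ∑ j, ω j) • f i)‖ₑ := by gcongr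
    _ = ∫⁻ ω in coordBox n, ‖u (∑ i, (ω i / ∑ j, ω j) • f i)‖ₑ ∂(Measure.map Ψ volume) := by
        rw [hmap, Measure.restrict_smul, lintegral_smul_measure]
        rfl
    _ = ∫⁻ z in Z, ‖u (∑ i, (Ψ z i / ∑ j, Ψ z j) • f i)‖ₑ :=
        setLIntegral_map hBm hmeas hcoord.measurable
    _ ≤ _ := by
        refine setLIntegral_mono' hZm fun z hz => ?_
        rw [hpt z hz]

end

end

section

/-! ### Jumps of coefficients across a facet -/

variable {n : ℕ}

/-- The polynomial `q` as a function on `ℝⁿ`. -/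
noncomputable abbrev polyFun (q : MvPolynomial (Fin n) ℝ) (z : EuclideanSpace ℝ (Fin n)) : ℝ :=
  MvPolynomial.eval (fun i => z i) q

/-- The `p`-th power of the local error `‖∇v - ∇q‖` in `Lᵖ(T)`. -/
noncomputable abbrev errInt (p : ℝ) (v : EuclideanSpace ℝ (Fin n) → ℝ)
    (q : MvPolynomial (Fin n) ℝ) (T : Finset (EuclideanSpace ℝ (Fin n))) : ℝ :=
  ∫ y in hull T, ‖fderiv ℝ v y - fderiv ℝ (polyFun q) y‖ ^ p

/-- The `p`-mean of `‖∇v - ∇q‖` over `T`. -/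
noncomputable def errMean (p : ℝ) (v : EuclideanSpace ℝ (Fin n) → ℝ)
    (q : MvPolynomial (Fin n) ℝ) (T : Finset (EuclideanSpace ℝ (Fin n))) : ℝ :=
  ((hvol T)⁻¹ * errInt p v q T) ^ (1 / p)

/-- The Poincaré inequality for `v - q` on `T`; it can be achieved by adding a constant to `q`. -/
def Normalized (v : EuclideanSpace ℝ (Fin n) → ℝ)
    (q : MvPolynomial (Fin n) ℝ) (T : Finset (EuclideanSpace ℝ (Fin n))) : Prop :=
  ∫⁻ y in hull T, ‖v y - polyFun q y‖ₑ ≤ 2 ^ (n + 1) * ENNReal.ofReal (hdiam T) *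
    ∫⁻ y in hull T, ‖fderiv ℝ (fun z => v z - polyFun q z) y‖ₑ

lemma errInt_nonneg (p : ℝ) (v : EuclideanSpace ℝ (Fin n) → ℝ)
    (q : MvPolynomial (Fin n) ℝ) (T : Finset (EuclideanSpace ℝ (Fin n))) : 0 ≤ errInt p v q T :=
  integral_nonneg fun _ => Real.rpow_nonneg (norm_nonneg _) _

lemma errMean_nonneg (p : ℝ) (v : EuclideanSpace ℝ (Fin n) → ℝ)
    (q : MvPolynomial (Fin n) ℝ) (T : Finset (EuclideanSpace ℝ (Fin n))) :
    0 ≤ errMean p v q T :=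
  Real.rpow_nonneg (mul_nonneg (inv_nonneg.2 ENNReal.toReal_nonneg) (errInt_nonneg p v q T)) _

lemma errMean_rpow {p : ℝ} (hp : 0 < p) (v : EuclideanSpace ℝ (Fin n) → ℝ)
    (q : MvPolynomial (Fin n) ℝ) (T : Finset (EuclideanSpace ℝ (Fin n))) :
    errMean p v q T ^ p = (hvol T)⁻¹ * errInt p v q T := by
  rw [errMean, ← Real.rpow_mul
    (mul_nonneg (inv_nonneg.2 ENNReal.toReal_nonneg) (errInt_nonneg p v q T)),
    one_div_mul_cancel hp.ne', Real.rpow_one]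

section
variable {v : EuclideanSpace ℝ (Fin n) → ℝ}

lemma fderiv_sub_polyFun (hv : ContDiff ℝ 1 v) (q : MvPolynomial (Fin n) ℝ)
    (y : EuclideanSpace ℝ (Fin n)) :
    fderiv ℝ (fun z => v z - polyFun q z) y = fderiv ℝ v y - fderiv ℝ (polyFun q) y :=
  fderiv_fun_sub (hv.differentiable one_ne_zero y)
    ((contDiff_eval q).differentiable one_ne_zero y)

lemma continuous_fderiv_sub (hv : ContDiff ℝ 1 v) (q : MvPolynomial (Fin n) ℝ) :
    Continuous fun y => fderiv ℝ v y - fderiv ℝ (polyFun q) y :=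
  (hv.continuous_fderiv one_ne_zero).sub ((contDiff_eval q).continuous_fderiv one_ne_zero)

lemma exists_normalized (hv : ContDiff ℝ 1 v) {r : ℕ} {q : MvPolynomial (Fin n) ℝ}
    (hq : q.totalDegree ≤ r) {T : Finset (EuclideanSpace ℝ (Fin n))} {β} (h : IsBary T β)
    (p : ℝ) : ∃ q' : MvPolynomial (Fin n) ℝ, q'.totalDegree ≤ r ∧ Normalized v q' T ∧
      errInt p v q' T = errInt p v q T := by
  have hu : ContDiff ℝ 1 fun z => v z - polyFun q z := hv.sub (contDiff_eval q)
  have h0 : volume (hull T) ≠ 0 := fun h0 => by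
    have := h.hvol_pos
    simp [hvol, h0] at this
  obtain ⟨y, _, hy⟩ := poincare hu (convex_convexHull ℝ _)
    (IsBary.isCompact_hull T).measurableSet
    (fun x hx y hy => dist_le_hdiam T hx hy) h0 (volume_hull_ne_top T)
  set c := v y - polyFun q y with hc
  have hfun : polyFun (q + MvPolynomial.C c) = fun z => polyFun q z + c := by
    funext z; simp [polyFun]
  have hD : ∀ x, fderiv ℝ (polyFun (q + MvPolynomial.C c)) x = fderiv ℝ (polyFun q) x := by
    intro x; rw [hfun]; exact fderiv_add_const c
  refine ⟨q + MvPolynomial.C c, ?_, ?_, ?_⟩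
  · refine (MvPolynomial.totalDegree_add _ _).trans (max_le hq ?_)
    simp
  · unfold Normalized
    simp only [fderiv_sub_polyFun hv] at hy ⊢
    simp only [hD]
    refine le_trans (le_of_eq ?_) hy
    refine lintegral_congr fun x => ?_
    rw [hfun, sub_add_eq_sub_sub]
  · unfold errInt
    simp only [hD]

/-- Jensen's inequality: the mean of the gradient is at most its `p`-mean. -/
lemma IsBary.lintegral_fderiv_le {T : Finset (EuclideanSpace ℝ (Fin n))} {β} (h : IsBary T β)
    {p : ℝ} (hp : 1 ≤ p) (hv : ContDiff ℝ 1 v) (q : MvPolynomial (Fin n) ℝ) :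
    ∫⁻ y in hull T, ‖fderiv ℝ (fun z => v z - polyFun q z) y‖ₑ ≤
      volume (hull T) * ENNReal.ofReal (errMean p v q T) := by
  have hp0 : 0 < p := by linarith
  set g : EuclideanSpace ℝ (Fin n) → ℝ := fun y => ‖fderiv ℝ v y - fderiv ℝ (polyFun q) y‖ with hg
  have hgc : Continuous g := (continuous_fderiv_sub hv q).norm
  have hgp : Continuous fun y => g y ^ p := hgc.rpow_const fun _ => Or.inr hp0.le
  have hk := IsBary.isCompact_hull T
  have hi1 : IntegrableOn g (hull T) := hgc.continuousOn.integrableOn_compact hk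
  have hi2 : IntegrableOn (fun y => g y ^ p) (hull T) := hgp.continuousOn.integrableOn_compact hk
  have hvp := h.hvol_pos
  have h0 : volume (hull T) ≠ 0 := fun h0 => by simp [hvol, h0] at hvp
  have hJ := (convexOn_rpow hp).map_set_average_le
    (Real.continuous_rpow_const hp0.le).continuousOn isClosed_Ici h0 (volume_hull_ne_top T)
    (Filter.Eventually.of_forall fun y => norm_nonneg _) hi1 hi2
  rw [setAverage_eq, setAverage_eq] at hJ
  have hI0 : 0 ≤ ∫ y in hull T, g y := integral_nonneg fun _ => norm_nonneg _
  have hle : (hvol T)⁻¹ * ∫ y in hull T, g y ≤ errMean p v q T := by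
    rw [← Real.rpow_le_rpow_iff (z := p) (by positivity) (errMean_nonneg p v q T) hp0,
      errMean_rpow hp0]
    simpa [Measure.real, errInt] using hJ
  have h1 : ∫⁻ y in hull T, ‖fderiv ℝ (fun z => v z - polyFun q z) y‖ₑ =
      ENNReal.ofReal (∫ y in hull T, g y) := by
    rw [ofReal_integral_eq_lintegral_ofReal hi1 (Filter.Eventually.of_forall fun y => norm_nonneg _)]
    refine lintegral_congr fun y => ?_
    rw [fderiv_sub_polyFun hv, hg, ofReal_norm]
  rw [h1, ← ENNReal.ofReal_toReal (volume_hull_ne_top T), ← ENNReal.ofReal_mul hvp.le]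
  refine ENNReal.ofReal_le_ofReal ?_
  rwa [inv_mul_le_iff₀ hvp] at hle

/-- The trace of `v - q` on a facet. -/
lemma IsBary.facet_err {S : Finset (EuclideanSpace ℝ (Fin n))} {β} (h : IsBary S β) (hn : 1 ≤ n)
    {a : EuclideanSpace ℝ (Fin n)}
    {f : Fin n → EuclideanSpace ℝ (Fin n)} (hf : Function.Injective f)
    (hS : S = insert a (Finset.univ.image f)) (ha : a ∉ Finset.univ.image f)
    {p : ℝ} (hp : 1 ≤ p) (hv : ContDiff ℝ 1 v) {q : MvPolynomial (Fin n) ℝ}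
    (hq : Normalized v q S) :
    ∫⁻ ω in coordBox n, ‖v (∑ i, (ω i / ∑ j, ω j) • f i) -
        polyFun q (∑ i, (ω i / ∑ j, ω j) • f i)‖ₑ ≤
      ENNReal.ofReal ((2 ^ (n + 1) + 1) * (hdiam S * errMean p v q S)) := by
  have h1 := h.facet_trace hn hf hS ha (hv.sub (contDiff_eval q))
  have hvp := h.hvol_pos
  have h0 : volume (hull S) ≠ 0 := fun h0 => by simp [hvol, h0] at hvp
  have h2 := h1.trans (add_le_add hq le_rfl)
  have h3 := h.lintegral_fderiv_le hp hv q
  rw [← ENNReal.mul_le_mul_iff_right h0 (volume_hull_ne_top S)]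
  refine h2.trans ?_
  have h4 : (2 : ENNReal) ^ (n + 1) = ENNReal.ofReal (2 ^ (n + 1)) := by
    rw [ENNReal.ofReal_pow (by norm_num)]; norm_num
  have hd : 0 ≤ hdiam S := Metric.diam_nonneg
  rw [ENNReal.ofReal_mul (by positivity), ENNReal.ofReal_mul hd,
    ENNReal.ofReal_add (by positivity) (by norm_num), ENNReal.ofReal_one, ← h4]
  calc _ = (2 ^ (n + 1) + 1) * ENNReal.ofReal (hdiam S) *
        ∫⁻ y in hull S, ‖fderiv ℝ (fun z => v z - polyFun q z) y‖ₑ := by ring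
    _ ≤ (2 ^ (n + 1) + 1) * ENNReal.ofReal (hdiam S) *
        (volume (hull S) * ENNReal.ofReal (errMean p v q S)) := by gcongr
    _ = _ := by ring

end

/-- A coefficient belonging to a facet is controlled by the values of the form on the facet. -/
lemma exists_facet_const (hn : 1 ≤ n) (r : ℕ) : ∃ C : ℝ, 0 < C ∧
    ∀ f : Fin n → EuclideanSpace ℝ (Fin n), Function.Injective f →
    ∀ P : MvPolynomial (EuclideanSpace ℝ (Fin n)) ℝ, P.IsHomogeneous r →
    ∀ α ∈ Finset.finsuppAntidiag (Finset.univ.image f) r,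
      ENNReal.ofReal |P.coeff α| ≤ ENNReal.ofReal C * ∫⁻ ω in coordBox n,
        ‖MvPolynomial.eval (fun x => ∑ i, if f i = x then ω i / ∑ j, ω j else 0) P‖ₑ := by
  obtain ⟨C, hC, h⟩ := exists_form_const_normalized hn r
  refine ⟨C, hC, fun f hf P hP α hα => ?_⟩
  have hmem : ∀ α ∈ Finset.finsuppAntidiag (Finset.univ.image f) r,
      (α.comapDomain f hf.injOn) ∈ Finset.finsuppAntidiag (Finset.univ : Finset (Fin n)) r ∧
      (α.comapDomain f hf.injOn).mapDomain f = α := by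
    intro α hα
    rw [Finset.mem_finsuppAntidiag] at hα ⊢
    refine ⟨⟨?_, Finset.subset_univ _⟩, Finsupp.mapDomain_comapDomain f hf α ?_⟩
    · rw [← hα.1, Finset.sum_image fun i _ j _ hij => hf hij]
      rfl
    · intro x hx
      simpa using hα.2 hx
  have h1 := h (fun γ => P.coeff (γ.mapDomain f)) _ (hmem α hα).1
  simp only [(hmem α hα).2] at h1
  refine h1.trans (le_of_eq ?_)
  congr 1
  refine lintegral_congr fun ω => ?_
  congr 1
  have hval : ∀ k, (∑ i, if f i = f k then ω i / ∑ j, ω j else 0) = ω k / ∑ j, ω j := by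
    intro k
    simp [hf.eq_iff]
  rw [eval_of_isHomogeneous hP (Finset.univ.image f)]
  · symm
    refine Finset.sum_nbij' (fun α => α.comapDomain f hf.injOn) (fun γ => γ.mapDomain f)
      (fun α hα => (hmem α hα).1) ?_ (fun α hα => (hmem α hα).2)
      (fun γ _ => Finsupp.comapDomain_mapDomain f hf γ) ?_
    · intro γ hγ
      rw [Finset.mem_finsuppAntidiag] at hγ ⊢
      constructor
      · rw [← hγ.1, Finset.sum_image fun i _ j _ hij => hf hij]
        simp [Finsupp.mapDomain_apply hf]
      · refine Finsupp.mapDomain_support.trans (Finset.image_subset_image (Finset.subset_univ _))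
    · intro α hα
      rw [(hmem α hα).2, Finset.prod_image fun i _ j _ hij => hf hij]
      simp only [hval]
      rfl
  · intro x hx
    refine Finset.sum_eq_zero fun i _ => if_neg fun hi => hx ?_
    rw [← hi]; simp

/-- Values on a facet of the form that represents `q`. -/
lemma eval_homog_facet {S : Finset (EuclideanSpace ℝ (Fin n))}
    {f : Fin n → EuclideanSpace ℝ (Fin n)} (hfS : ∀ i, f i ∈ S)
    (r : ℕ) (q : MvPolynomial (Fin n) ℝ) {c : Fin n → ℝ} (hc : ∑ i, c i = 1) :
    MvPolynomial.eval (fun x => ∑ i, if f i = x then c i else 0) (homog S r q) =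
      polyFun q (∑ i, c i • f i) := by
  have h1 : ∑ x ∈ S, (∑ i, if f i = x then c i else 0) • x = ∑ i, c i • f i := by
    simp only [Finset.sum_smul, ite_smul, zero_smul]
    rw [Finset.sum_comm]
    refine Finset.sum_congr rfl fun i _ => ?_
    rw [Finset.sum_ite_eq, if_pos (hfS i)]
  have h2 : ∑ x ∈ S, (∑ i, if f i = x then c i else 0) = 1 := by
    rw [Finset.sum_comm, ← hc]
    refine Finset.sum_congr rfl fun i _ => ?_
    rw [Finset.sum_ite_eq, if_pos (hfS i)]
  rw [eval_homog _ _ _ _ h2, h1]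

end

section

variable {n : ℕ}

lemma exists_facet_labelling {S F : Finset (EuclideanSpace ℝ (Fin n))} (hFS : F ⊆ S)
    (hF : F.card = n) (hS : S.card = n + 1) :
    ∃ (a : EuclideanSpace ℝ (Fin n)) (f : Fin n → EuclideanSpace ℝ (Fin n)),
      Function.Injective f ∧ Finset.univ.image f = F ∧ S = insert a (Finset.univ.image f) ∧
      a ∉ Finset.univ.image f := by
  obtain ⟨a, ha, haS⟩ := Finset.exists_eq_insert_iff.2 ⟨hFS, by rw [hF, hS]⟩
  let e := F.equivFinOfCardEq hF
  have himg : Finset.univ.image (fun i => (e.symm i : EuclideanSpace ℝ (Fin n))) = F := by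
    ext x
    simp only [Finset.mem_image, Finset.mem_univ, true_and]
    constructor
    · rintro ⟨i, rfl⟩; exact (e.symm i).2
    · intro hx; exact ⟨e ⟨x, hx⟩, by simp⟩
  refine ⟨a, fun i => (e.symm i : EuclideanSpace ℝ (Fin n)),
    fun i j hij => e.symm.injective (Subtype.ext hij), himg, ?_, ?_⟩
  · rw [himg, haS]
  · rwa [himg]

lemma labelling_eq {S F : Finset (EuclideanSpace ℝ (Fin n))} (hFS : F ⊆ S)
    (hF : F.card = n) (hS : S.card = n + 1) :
    ∃ a, S = insert a F ∧ a ∉ F := by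
  obtain ⟨a, ha, haS⟩ := Finset.exists_eq_insert_iff.2 ⟨hFS, by rw [hF, hS]⟩
  exact ⟨a, haS.symm, ha⟩

/-- The coefficients that two neighbouring simplices attach to a common facet differ by at most a
multiple of diameter times mean error, summed over the two simplices; the value of `v` on the facet
cancels. -/
lemma exists_jump_const (hn : 1 ≤ n) (r : ℕ) : ∃ C : ℝ, 0 < C ∧
    ∀ p : ℝ, 1 ≤ p → ∀ v : EuclideanSpace ℝ (Fin n) → ℝ, ContDiff ℝ 1 v →
    ∀ S S' β β', IsBary S β → IsBary S' β' → (S ∩ S').card = n →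
    ∀ q q' : MvPolynomial (Fin n) ℝ, q.totalDegree ≤ r → q'.totalDegree ≤ r →
    Normalized v q S → Normalized v q' S' →
    ∀ α ∈ Finset.finsuppAntidiag (S ∩ S') r,
      |(homog S r q).coeff α - (homog S' r q').coeff α| ≤
        C * (hdiam S * errMean p v q S + hdiam S' * errMean p v q' S') := by
  obtain ⟨C, hC, h⟩ := exists_facet_const hn r
  refine ⟨C * (2 ^ (n + 1) + 1), by positivity,
    fun p hp v hv S S' β β' hS hS' hF q q' hq hq' hN hN' α hα => ?_⟩
  obtain ⟨a, f, hf, himg, hSa, ha⟩ :=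
    exists_facet_labelling (Finset.inter_subset_left (s₁ := S) (s₂ := S')) hF hS.card
  obtain ⟨a', hSa', ha'⟩ :=
    labelling_eq (Finset.inter_subset_right (s₁ := S) (s₂ := S')) hF hS'.card
  rw [← himg] at hSa' ha' hα
  have h1 := h f hf (homog S r q - homog S' r q')
    ((homog_isHomogeneous S hq).sub (homog_isHomogeneous S' hq')) α hα
  have e1 := hS.facet_err hn hf hSa ha hp hv hN
  have e2 := hS'.facet_err hn hf hSa' ha' hp hv hN'
  have hfS : ∀ i, f i ∈ S := fun i => by rw [hSa]; simp
  have hfS' : ∀ i, f i ∈ S' := fun i => by rw [hSa']; simp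
  have hpt : ∫⁻ ω in coordBox n, ‖MvPolynomial.eval
        (fun x => ∑ i, if f i = x then ω i / ∑ j, ω j else 0) (homog S r q - homog S' r q')‖ₑ ≤
      (∫⁻ ω in coordBox n, ‖v (∑ i, (ω i / ∑ j, ω j) • f i) -
        polyFun q (∑ i, (ω i / ∑ j, ω j) • f i)‖ₑ) +
      ∫⁻ ω in coordBox n, ‖v (∑ i, (ω i / ∑ j, ω j) • f i) -
        polyFun q' (∑ i, (ω i / ∑ j, ω j) • f i)‖ₑ := by
    have hm : Measurable fun ω : Fin n → ℝ => ‖v (∑ i, (ω i / ∑ j, ω j) • f i) -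
        polyFun q (∑ i, (ω i / ∑ j, ω j) • f i)‖ₑ := by
      refine Measurable.enorm ((hv.sub (contDiff_eval q)).continuous.measurable.comp
        (g := fun z => v z - polyFun q z)
        (f := fun ω : Fin n → ℝ => ∑ i, (ω i / ∑ j, ω j) • f i) ?_)
      fun_prop
    rw [← lintegral_add_left hm]
    refine setLIntegral_mono' measurableSet_Icc fun ω hω => ?_
    obtain ⟨b1, b2, b3⟩ := coordBox_bounds hn hω
    have hs : ∑ i, ω i / ∑ j, ω j = 1 := by
      rw [← Finset.sum_div, div_self (by linarith)]
    rw [map_sub, eval_homog_facet hfS r q hs, eval_homog_facet hfS' r q' hs]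
    refine le_trans (le_of_eq ?_) (enorm_sub_le.trans_eq (add_comm _ _))
    congr 1
    ring
  have h2 := h1.trans (mul_le_mul_right (hpt.trans (add_le_add e1 e2)) _)
  have n1 := errMean_nonneg p v q S
  have n2 := errMean_nonneg p v q' S'
  have d1 : 0 ≤ hdiam S := Metric.diam_nonneg
  have d2 : 0 ≤ hdiam S' := Metric.diam_nonneg
  rw [← ENNReal.ofReal_add (by positivity) (by positivity), ← ENNReal.ofReal_mul hC.le,
    ENNReal.ofReal_le_ofReal_iff (by positivity), MvPolynomial.coeff_sub] at h2
  refine h2.trans (le_of_eq (by ring))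

/-- In dimension one a facet is a vertex, and the coefficient there is compared with the value of
the function itself. -/
lemma exists_vertex_const (hn : n = 1) (r : ℕ) : ∃ C : ℝ, 0 < C ∧
    ∀ p : ℝ, 1 ≤ p → ∀ v : EuclideanSpace ℝ (Fin n) → ℝ, ContDiff ℝ 1 v →
    ∀ S β, IsBary S β →
    ∀ q : MvPolynomial (Fin n) ℝ, q.totalDegree ≤ r → Normalized v q S →
    ∀ x ∈ S, |(homog S r q).coeff (Finsupp.single x r) - v x| ≤
        C * (hdiam S * errMean p v q S) := by
  have hn1 : 1 ≤ n := hn.ge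
  obtain ⟨C, hC, h⟩ := exists_facet_const hn1 r
  refine ⟨C * (2 ^ (n + 1) + 1), by positivity, fun p hp v hv S β hS q hq hN x hx => ?_⟩
  obtain ⟨a, f, hf, himg, hSa, ha⟩ :=
    exists_facet_labelling (Finset.singleton_subset_iff.2 hx) (by rw [Finset.card_singleton, hn])
      hS.card
  have hfS : ∀ i, f i ∈ S := fun i => by rw [hSa]; simp
  have hfx : ∀ i, f i = x := fun i => by
    have : f i ∈ Finset.univ.image f := by simp
    rw [himg] at this
    simpa using this
  have hα : Finsupp.single x r ∈ Finset.finsuppAntidiag (Finset.univ.image f) r := by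
    rw [himg, Finset.mem_finsuppAntidiag]
    refine ⟨by simp, Finsupp.support_single_subset⟩
  have hhom : (MvPolynomial.monomial (Finsupp.single x r) (v x)).IsHomogeneous r :=
    MvPolynomial.isHomogeneous_monomial _ (by simp [Finsupp.degree_single])
  have h1 := h f hf (homog S r q - MvPolynomial.monomial (Finsupp.single x r) (v x))
    ((homog_isHomogeneous S hq).sub hhom) _ hα
  have e1 := hS.facet_err hn1 hf hSa ha hp hv hN
  have hpt : ∫⁻ ω in coordBox n, ‖MvPolynomial.eval
        (fun x => ∑ i, if f i = x then ω i / ∑ j, ω j else 0)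
        (homog S r q - MvPolynomial.monomial (Finsupp.single x r) (v x))‖ₑ ≤
      ∫⁻ ω in coordBox n, ‖v (∑ i, (ω i / ∑ j, ω j) • f i) -
        polyFun q (∑ i, (ω i / ∑ j, ω j) • f i)‖ₑ := by
    refine setLIntegral_mono' measurableSet_Icc fun ω hω => ?_
    obtain ⟨b1, b2, b3⟩ := coordBox_bounds hn1 hω
    have hs : ∑ i, ω i / ∑ j, ω j = 1 := by
      rw [← Finset.sum_div, div_self (by linarith)]
    have hy : ∑ i, (ω i / ∑ j, ω j) • f i = x := by
      simp only [hfx]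
      rw [← Finset.sum_smul, hs, one_smul]
    rw [map_sub, eval_homog_facet hfS r q hs, hy, MvPolynomial.eval_monomial,
      Finsupp.prod_single_index (by exact pow_zero _)]
    simp only [hfx, if_true, hs, one_pow, mul_one]
    rw [← enorm_neg, neg_sub]
  have h2 := h1.trans (mul_le_mul_right (hpt.trans e1) _)
  have n1 := errMean_nonneg p v q S
  have d1 : 0 ≤ hdiam S := Metric.diam_nonneg
  rw [← ENNReal.ofReal_mul hC.le,
    ENNReal.ofReal_le_ofReal_iff (by positivity), MvPolynomial.coeff_sub,
    MvPolynomial.coeff_monomial, if_pos rfl] at h2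
  refine h2.trans (le_of_eq (by ring))

end

section

/-! ### Chains of neighbouring simplices -/

/-- Differences along a chain in a finite set `V` are controlled by the sum over `V`, because loops
in the chain can be removed. -/
lemma chain_bound {ι : Type*} (V : Finset ι) (R : ι → ι → Prop) (hsymm : ∀ x y, R x y → R y x)
    (b δ h : ι → ℝ) {Λ : ℝ} (hΛ : 1 ≤ Λ) (hδ : ∀ x ∈ V, 0 ≤ δ x) (hh : ∀ x ∈ V, 0 ≤ h x)
    (hb : ∀ x ∈ V, ∀ y ∈ V, R x y → |b x - b y| ≤ δ x + δ y)
    (hR : ∀ x ∈ V, ∀ y ∈ V, R x y → h x ≤ Λ * h y)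
    (N : ℕ) (c : Fin (N + 1) → ι) (hcV : ∀ i, c i ∈ V)
    (hcR : ∀ i : Fin N, R (c i.castSucc) (c i.succ)) :
    |b (c 0) - b (c (Fin.last N))| ≤ 2 * ∑ x ∈ V, δ x ∧
      h (c 0) ≤ Λ ^ V.card * h (c (Fin.last N)) := by
  let G : SimpleGraph V := SimpleGraph.fromRel fun x y => R x y
  have hG : ∀ x y : V, G.Adj x y → R x y := by
    intro x y hxy
    rw [SimpleGraph.fromRel_adj] at hxy
    rcases hxy.2 with h | h
    · exact h
    · exact hsymm _ _ h
  let c' : Fin (N + 1) → V := fun i => ⟨c i, hcV i⟩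
  have hreach : ∀ i : Fin (N + 1), G.Reachable (c' 0) (c' i) := by
    intro i
    induction i using Fin.induction with
    | zero => exact SimpleGraph.Reachable.refl _
    | succ i ih =>
      by_cases heq : c' i.castSucc = c' i.succ
      · rw [← heq]; exact ih
      · refine ih.trans (SimpleGraph.Adj.reachable ?_)
        rw [SimpleGraph.fromRel_adj]
        exact ⟨heq, Or.inl (hcR i)⟩
  have hwalk : ∀ (x y : V) (w : G.Walk x y),
      |b x - b y| ≤ 2 * (w.support.map fun z : V => δ z).sum - δ x ∧
        h x ≤ Λ ^ w.length * h y := by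
    intro x y w
    induction w with
    | @nil x =>
      have := hδ x x.2
      simp; linarith
    | @cons x z y hxz w ih =>
      obtain ⟨i1, i2⟩ := ih
      have r := hG _ _ hxz
      have j1 := hb x x.2 z z.2 r
      have j2 := hR x x.2 z z.2 r
      refine ⟨?_, ?_⟩
      · rw [SimpleGraph.Walk.support_cons, List.map_cons, List.sum_cons]
        have := abs_sub_le (b x) (b z) (b y)
        linarith
      · rw [SimpleGraph.Walk.length_cons, pow_succ']
        calc h x ≤ Λ * h z := j2
          _ ≤ Λ * (Λ ^ w.length * h y) := by gcongr
          _ = _ := by ring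
  obtain ⟨w, hw⟩ := (hreach (Fin.last N)).exists_isPath
  obtain ⟨w1, w2⟩ := hwalk _ _ w
  refine ⟨?_, ?_⟩
  · have hsum : (w.support.map fun z : V => δ z).sum ≤ ∑ x ∈ V, δ x := by
      rw [← List.sum_toFinset _ hw.support_nodup, ← Finset.sum_coe_sort V]
      exact Finset.sum_le_sum_of_subset_of_nonneg (Finset.subset_univ _) fun z _ _ => hδ z z.2
    have := hδ _ (hcV 0)
    have w1' : |b (c 0) - b (c (Fin.last N))| ≤
      2 * (w.support.map fun z : V => δ z).sum - δ (c 0) := w1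
    linarith
  · have hlen : w.length ≤ V.card := by
      have := hw.length_lt
      rw [Fintype.card_coe] at this
      exact this.le
    have w2' : h (c 0) ≤ Λ ^ w.length * h (c (Fin.last N)) := w2
    refine w2'.trans ?_
    have := hh _ (hcV (Fin.last N))
    gcongr

end

section

/-! ### Global coefficients on the mesh -/

variable {n : ℕ}

/-- The `n`-simplices of a shape-regular face-connected complex, with their barycentric
coordinates. -/
structure IsMesh (M : ℝ) (𝒯 : Finset (Finset (EuclideanSpace ℝ (Fin n))))
    (β : Finset (EuclideanSpace ℝ (Fin n)) → EuclideanSpace ℝ (Fin n) →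
      (EuclideanSpace ℝ (Fin n) →ᵃ[ℝ] ℝ)) : Prop where
  bary : ∀ T ∈ 𝒯, IsBary T (β T)
  shape : ∀ T ∈ 𝒯, hdiam T ^ n ≤ M * hvol T
  inter : ∀ S ∈ 𝒯, ∀ T ∈ 𝒯, hull S ∩ hull T ⊆
    convexHull ℝ ((S : Set (EuclideanSpace ℝ (Fin n))) ∩ T)
  chain : ∀ S ∈ 𝒯, ∀ T ∈ 𝒯, (S ∩ T).Nonempty →
    ∃ (N : ℕ) (c : Fin (N + 1) → Finset (EuclideanSpace ℝ (Fin n))),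
      c 0 = S ∧ c (Fin.last N) = T ∧ (∀ i, c i ∈ 𝒯) ∧
      ∀ i : Fin N, (c i.castSucc ∩ c i.succ).card = n ∧ S ∩ T ⊆ c i.castSucc ∩ c i.succ

/-- There are globally defined coefficients `b` such that on each simplex `T` they differ from
those of `q T` by the errors on a patch of `T`.  The patches have bounded cardinality and overlap,
and the volume of `T` is at most a multiple of that of each simplex in its patch. -/
def CoeffApprox (C p : ℝ) (r : ℕ) (𝒯 : Finset (Finset (EuclideanSpace ℝ (Fin n))))
    (v : EuclideanSpace ℝ (Fin n) → ℝ)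
    (q : Finset (EuclideanSpace ℝ (Fin n)) → MvPolynomial (Fin n) ℝ) : Prop :=
  ∃ (b : (EuclideanSpace ℝ (Fin n) →₀ ℕ) → ℝ)
    (patch : Finset (EuclideanSpace ℝ (Fin n)) → Finset (Finset (EuclideanSpace ℝ (Fin n)))),
    (∀ T ∈ 𝒯, ∀ α ∈ Finset.finsuppAntidiag T r, |(homog T r (q T)).coeff α - b α| ≤
      C * (hdiam T * ∑ S ∈ patch T, errMean p v (q S) S)) ∧
    (∀ T ∈ 𝒯, patch T ⊆ 𝒯) ∧
    (∀ T ∈ 𝒯, ∀ S ∈ patch T, hvol T ≤ C * hvol S) ∧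
    (∀ T ∈ 𝒯, ((patch T).card : ℝ) ≤ C) ∧
    (∀ S ∈ 𝒯, ((𝒯.filter fun T => S ∈ patch T).card : ℝ) ≤ C)

section
variable {M : ℝ} {𝒯 : Finset (Finset (EuclideanSpace ℝ (Fin n)))}
    {β : Finset (EuclideanSpace ℝ (Fin n)) → EuclideanSpace ℝ (Fin n) →
      (EuclideanSpace ℝ (Fin n) →ᵃ[ℝ] ℝ)}

lemma IsMesh.star_card (h : IsMesh M 𝒯 β) (hn : 1 ≤ n) (hM : 0 ≤ M)
    (x : EuclideanSpace ℝ (Fin n)) :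
    ((𝒯.filter fun T => x ∈ T).card : ℝ) ≤ M * ballVol n := by
  refine star_card_le hn hM _ x (fun T hT => (Finset.mem_filter.1 hT).2)
    (fun T hT => ⟨_, h.bary T (Finset.mem_filter.1 hT).1⟩)
    (fun T hT => h.shape T (Finset.mem_filter.1 hT).1) fun S hS T hT hne => ?_
  have hS' := (Finset.mem_filter.1 hS).1
  have hT' := (Finset.mem_filter.1 hT).1
  have hnsub : ¬ T ⊆ S := fun hsub => hne
    (Finset.eq_of_subset_of_card_le hsub (by rw [(h.bary S hS').card, (h.bary T hT').card])).symm
  obtain ⟨y, hyT, hyS⟩ := Finset.not_subset.1 hnsub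
  exact measure_mono_null (h.inter S hS' T hT') ((h.bary T hT').volume_inter_null hyT hyS)

lemma IsMesh.patch_card (h : IsMesh M 𝒯 β) (hn : 1 ≤ n) (hM : 0 ≤ M)
    {T : Finset (EuclideanSpace ℝ (Fin n))} (hT : T ∈ 𝒯) :
    ((𝒯.filter fun S => (S ∩ T).Nonempty).card : ℝ) ≤ (n + 1) * (M * ballVol n) := by
  have hsub : (𝒯.filter fun S => (S ∩ T).Nonempty) ⊆
      T.biUnion fun x => 𝒯.filter fun S => x ∈ S := by
    intro S hS
    rw [Finset.mem_filter] at hS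
    obtain ⟨hS, x, hx⟩ := hS
    rw [Finset.mem_inter] at hx
    exact Finset.mem_biUnion.2 ⟨x, hx.2, Finset.mem_filter.2 ⟨hS, hx.1⟩⟩
  calc ((𝒯.filter fun S => (S ∩ T).Nonempty).card : ℝ)
      ≤ ∑ x ∈ T, ((𝒯.filter fun S => x ∈ S).card : ℝ) := by
        exact_mod_cast (Finset.card_le_card hsub).trans Finset.card_biUnion_le
    _ ≤ ∑ x ∈ T, M * ballVol n := Finset.sum_le_sum fun x _ => h.star_card hn hM x
    _ = _ := by rw [Finset.sum_const, (h.bary T hT).card, nsmul_eq_mul]; push_cast; ring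

/-- Along a chain of simplices that contain the common face `σ`, increments add up to at most twice
the sum over the star of `σ`, and diameters stay comparable. -/
lemma IsMesh.star_bound (h : IsMesh M 𝒯 β) (hn : 2 ≤ n) (hM : 0 ≤ M)
    {σ : Finset (EuclideanSpace ℝ (Fin n))} (hσ : σ.Nonempty)
    {S T : Finset (EuclideanSpace ℝ (Fin n))} (hS : S ∈ 𝒯) (hT : T ∈ 𝒯) (hσS : σ ⊆ S)
    (hσT : σ ⊆ T) (b δ : Finset (EuclideanSpace ℝ (Fin n)) → ℝ)
    (hδ : ∀ X ∈ 𝒯, 0 ≤ δ X)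
    (hb : ∀ X ∈ 𝒯, ∀ Y ∈ 𝒯, (X ∩ Y).card = n → σ ⊆ X ∩ Y → |b X - b Y| ≤ δ X + δ Y) :
    |b S - b T| ≤ 2 * ∑ X ∈ 𝒯.filter (fun X => σ ⊆ X), δ X ∧
      hdiam S ≤ (max 1 (2 ^ n * ballVol n * M)) ^ ⌊M * ballVol n⌋₊ * hdiam T := by
  have hn1 : 1 ≤ n := by omega
  obtain ⟨N, c, h0, hl, hc, hcc⟩ := h.chain S hS T hT
    (hσ.mono (Finset.subset_inter hσS hσT))
  have hcσ : ∀ i, σ ⊆ c i := by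
    intro i
    refine Fin.cases ?_ (fun j => ?_) i
    · rw [h0]; exact hσS
    · exact (Finset.subset_inter hσS hσT).trans ((hcc j).2.trans Finset.inter_subset_right)
  set Λ := max 1 (2 ^ n * ballVol n * M) with hΛ
  have hb0 := ballVol_pos (n := n)
  have hcmp : ∀ X ∈ 𝒯.filter (fun X => σ ⊆ X), ∀ Y ∈ 𝒯.filter (fun X => σ ⊆ X),
      (X ∩ Y).card = n → hdiam X ≤ Λ * hdiam Y := by
    intro X hX Y hY hXY
    -- since `n ≥ 2`, the common facet of the two simplices contains an edge
    have hX' := (Finset.mem_filter.1 hX).1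
    obtain ⟨x, hx, y, hy, hxy⟩ := Finset.one_lt_card.1 (show 1 < (X ∩ Y).card by omega)
    rw [Finset.mem_inter] at hx hy
    have e1 := (h.bary X hX').hdiam_le_of_edge hn1 (h.shape X hX') hx.1 hy.1 hxy
    have e2 : dist x y ≤ hdiam Y :=
      dist_le_hdiam Y (subset_convexHull ℝ _ hx.2) (subset_convexHull ℝ _ hy.2)
    refine e1.trans (mul_le_mul (le_max_right _ _) e2 dist_nonneg ?_)
    exact zero_le_one.trans (le_max_left _ _)
  obtain ⟨h1, h2⟩ := chain_bound (𝒯.filter fun X => σ ⊆ X) (fun X Y => (X ∩ Y).card = n)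
    (fun X Y hXY => by rw [Finset.inter_comm]; exact hXY) b δ (fun X => hdiam X)
    (le_max_left 1 _ : 1 ≤ Λ) (fun X hX => hδ X (Finset.mem_filter.1 hX).1)
    (fun X _ => Metric.diam_nonneg)
    (fun X hX Y hY hXY => hb X (Finset.mem_filter.1 hX).1 Y (Finset.mem_filter.1 hY).1 hXY
      (Finset.subset_inter (Finset.mem_filter.1 hX).2 (Finset.mem_filter.1 hY).2))
    hcmp N c (fun i => Finset.mem_filter.2 ⟨hc i, hcσ i⟩)
    (fun i => (hcc i).1)
  · rw [h0, hl] at h1 h2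
    refine ⟨h1, h2.trans ?_⟩
    have hd : 0 ≤ hdiam T := Metric.diam_nonneg
    refine mul_le_mul_of_nonneg_right (pow_le_pow_right₀ (le_max_left _ _) ?_) hd
    obtain ⟨x, hx⟩ := hσ
    rw [Nat.le_floor_iff (by positivity)]
    refine le_trans ?_ (h.star_card hn1 hM x)
    have hsub : (𝒯.filter fun X => σ ⊆ X) ⊆ 𝒯.filter (fun X => x ∈ X) := fun X hX =>
      Finset.mem_filter.2 ⟨(Finset.mem_filter.1 hX).1, (Finset.mem_filter.1 hX).2 hx⟩
    exact_mod_cast Finset.card_le_card hsub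

end

lemma support_nonempty {T : Finset (EuclideanSpace ℝ (Fin n))} {r : ℕ} (hr : 1 ≤ r)
    {α : EuclideanSpace ℝ (Fin n) →₀ ℕ} (hα : α ∈ Finset.finsuppAntidiag T r) :
    α.support.Nonempty := by
  rw [Finsupp.support_nonempty_iff]
  rintro rfl
  have := (Finset.mem_finsuppAntidiag.1 hα).1
  simp at this
  omega

/-- In dimension at least two the coefficient of a monomial is taken from an arbitrary simplex
containing the vertices that occur in it. -/
lemma exists_coeffApprox_of_two_le (hn : 2 ≤ n) {r : ℕ} (hr : 1 ≤ r) {p : ℝ} (hp : 1 ≤ p) {M : ℝ}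
    (hM : 0 < M) : ∃ C : ℝ, 0 < C ∧
    ∀ 𝒯 β, IsMesh (n := n) M 𝒯 β → ∀ v : EuclideanSpace ℝ (Fin n) → ℝ, ContDiff ℝ 1 v →
    ∀ q : Finset (EuclideanSpace ℝ (Fin n)) → MvPolynomial (Fin n) ℝ,
    (∀ T ∈ 𝒯, (q T).totalDegree ≤ r) → (∀ T ∈ 𝒯, Normalized v (q T) T) →
    CoeffApprox C p r 𝒯 v q := by
  have hn1 : 1 ≤ n := by omega
  obtain ⟨J, hJ, hjump⟩ := exists_jump_const hn1 r
  have hb0 := ballVol_pos (n := n)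
  set D := (max 1 (2 ^ n * ballVol n * M)) ^ ⌊M * ballVol n⌋₊ with hD
  have hD1 : 1 ≤ D := one_le_pow₀ (le_max_left _ _)
  have hD0 : 0 < D := by linarith
  have c1 : 0 < 2 * J * D := by positivity
  have c2 : 0 < ballVol n * D ^ n * M := by positivity
  have c3 : 0 < (n + 1) * (M * ballVol n) := by positivity
  refine ⟨2 * J * D + ballVol n * D ^ n * M + (n + 1) * (M * ballVol n), by positivity,
    fun 𝒯 β h v hv q hq hN => ?_⟩
  set C := 2 * J * D + ballVol n * D ^ n * M + (n + 1) * (M * ballVol n) with hC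
  have hext : ∀ α : EuclideanSpace ℝ (Fin n) →₀ ℕ, ∃ T,
      (∃ T' ∈ 𝒯, α.support ⊆ T') → T ∈ 𝒯 ∧ α.support ⊆ T := by
    intro α
    by_cases hex : ∃ T' ∈ 𝒯, α.support ⊆ T'
    · obtain ⟨T', h1, h2⟩ := hex
      exact ⟨T', fun _ => ⟨h1, h2⟩⟩
    · exact ⟨∅, fun h => absurd h hex⟩
  choose τ hτ using hext
  have hsize : ∀ S ∈ 𝒯, ∀ T ∈ 𝒯, ∀ σ : Finset (EuclideanSpace ℝ (Fin n)), σ.Nonempty →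
      σ ⊆ S → σ ⊆ T → hdiam S ≤ D * hdiam T := fun S hS T hT σ hσ hσS hσT =>
    (h.star_bound hn hM.le hσ hS hT hσS hσT (fun _ => 0) (fun _ => 0) (fun _ _ => le_rfl)
      (fun _ _ _ _ _ _ => by simp)).2
  refine ⟨fun α => (homog (τ α) r (q (τ α))).coeff α,
    fun T => 𝒯.filter fun S => (S ∩ T).Nonempty, ?_, ?_, ?_, ?_, ?_⟩
  · intro T hT α hα
    have hαT := (Finset.mem_finsuppAntidiag.1 hα).2
    have hne := support_nonempty hr hα
    obtain ⟨t1, t2⟩ := hτ α ⟨T, hT, hαT⟩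
    have e1 := (h.star_bound hn hM.le hne hT t1 hαT t2
      (fun X => (homog X r (q X)).coeff α) (fun X => J * (hdiam X * errMean p v (q X) X))
      (fun X _ => mul_nonneg hJ.le (mul_nonneg Metric.diam_nonneg (errMean_nonneg _ _ _ _)))
      (fun X hX Y hY hXY hσ => by
        rw [← mul_add]
        refine hjump p hp v hv X Y _ _ (h.bary X hX) (h.bary Y hY) hXY _ _ (hq X hX) (hq Y hY)
          (hN X hX) (hN Y hY) α (Finset.mem_finsuppAntidiag.2 ⟨?_, hσ⟩)
        rw [← (Finset.mem_finsuppAntidiag.1 hα).1,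
          ← Finset.sum_subset hσ (fun x _ hx => Finsupp.notMem_support_iff.1 hx),
          Finset.sum_subset hαT (fun x _ hx => Finsupp.notMem_support_iff.1 hx)])).1
    refine e1.trans ?_
    have hd : 0 ≤ hdiam T := Metric.diam_nonneg
    have e2 : ∑ X ∈ 𝒯.filter (fun X => α.support ⊆ X), J * (hdiam X * errMean p v (q X) X) ≤
        ∑ X ∈ 𝒯.filter (fun S => (S ∩ T).Nonempty), J * (D * hdiam T * errMean p v (q X) X) := by
      refine (Finset.sum_le_sum fun X hX => ?_).trans
        (Finset.sum_le_sum_of_subset_of_nonneg (fun X hX => ?_) fun X _ _ => ?_)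
      · rw [Finset.mem_filter] at hX
        have := hsize X hX.1 T hT α.support hne hX.2 hαT
        have := errMean_nonneg p v (q X) X
        gcongr
      · rw [Finset.mem_filter] at hX ⊢
        exact ⟨hX.1, hne.mono (Finset.subset_inter hX.2 hαT)⟩
      · have := errMean_nonneg p v (q X) X
        positivity
    have hsum0 : 0 ≤ ∑ X ∈ 𝒯.filter (fun S => (S ∩ T).Nonempty), errMean p v (q X) X :=
      Finset.sum_nonneg fun X _ => errMean_nonneg p v (q X) X
    rw [← Finset.mul_sum, ← Finset.mul_sum, ← Finset.mul_sum] at e2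
    calc _ ≤ 2 * J * D * (hdiam T *
          ∑ X ∈ 𝒯.filter (fun S => (S ∩ T).Nonempty), errMean p v (q X) X) := by
            rw [← Finset.mul_sum]; linarith
      _ ≤ _ := by gcongr; linarith
  · exact fun T _ => Finset.filter_subset _ _
  · intro T hT S hS
    rw [Finset.mem_filter] at hS
    have hvS := (h.bary S hS.1).hvol_pos
    have e1 := hsize T hT S hS.1 (S ∩ T) hS.2 Finset.inter_subset_right Finset.inter_subset_left
    have e2 := (h.bary T hT).hvol_le
    have e3 := h.shape S hS.1
    have hd : 0 ≤ hdiam T := Metric.diam_nonneg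
    calc hvol T ≤ ballVol n * hdiam T ^ n := e2
      _ ≤ ballVol n * (D * hdiam S) ^ n := by gcongr
      _ = ballVol n * D ^ n * hdiam S ^ n := by ring
      _ ≤ ballVol n * D ^ n * (M * hvol S) := by gcongr
      _ = ballVol n * D ^ n * M * hvol S := by ring
      _ ≤ C * hvol S := by gcongr; linarith
  · intro T hT
    refine (h.patch_card hn1 hM.le hT).trans ?_
    linarith
  · intro S hS
    have := h.patch_card hn1 hM.le hS
    have heq : (𝒯.filter fun T => S ∈ 𝒯.filter fun S => (S ∩ T).Nonempty) =
        𝒯.filter fun T => (T ∩ S).Nonempty := by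
      refine Finset.filter_congr fun T _ => ?_
      rw [Finset.mem_filter, Finset.inter_comm]
      exact ⟨fun h => h.2, fun h => ⟨hS, h⟩⟩
    rw [heq]
    linarith

/-- In dimension one neighbouring intervals need not have comparable size.  There the values of `v`
serve as coefficients at the vertices, and all other coefficients belong to one interval. -/
lemma exists_coeffApprox_of_eq_one (hn : n = 1) {r : ℕ} (hr : 1 ≤ r) {p : ℝ} (hp : 1 ≤ p) {M : ℝ} :
    ∃ C : ℝ, 0 < C ∧
    ∀ 𝒯 β, IsMesh (n := n) M 𝒯 β → ∀ v : EuclideanSpace ℝ (Fin n) → ℝ, ContDiff ℝ 1 v →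
    ∀ q : Finset (EuclideanSpace ℝ (Fin n)) → MvPolynomial (Fin n) ℝ,
    (∀ T ∈ 𝒯, (q T).totalDegree ≤ r) → (∀ T ∈ 𝒯, Normalized v (q T) T) →
    CoeffApprox C p r 𝒯 v q := by
  obtain ⟨J, hJ, hvert⟩ := exists_vertex_const hn r
  refine ⟨J + 1, by positivity, fun 𝒯 β h v hv q hq hN => ?_⟩
  have hb : ∀ α : EuclideanSpace ℝ (Fin n) →₀ ℕ, ∃ b : ℝ,
      ∀ T ∈ 𝒯, α ∈ Finset.finsuppAntidiag T r → |(homog T r (q T)).coeff α - b| ≤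
        J * (hdiam T * errMean p v (q T) T) := by
    intro α
    by_cases hx : ∃ x, α = Finsupp.single x r
    · obtain ⟨x, rfl⟩ := hx
      refine ⟨v x, fun T hT hα => hvert p hp v hv T _ (h.bary T hT) _ (hq T hT) (hN T hT) x ?_⟩
      refine (Finset.mem_finsuppAntidiag.1 hα).2 ?_
      rw [Finsupp.mem_support_iff, Finsupp.single_eq_same]
      omega
    · refine ⟨(homog α.support r (q α.support)).coeff α, fun T hT hα => ?_⟩
      have hsub := (Finset.mem_finsuppAntidiag.1 hα).2
      have hsum := (Finset.mem_finsuppAntidiag.1 hα).1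
      have hcard : 2 ≤ α.support.card := by
        by_contra hlt
        have hne := Finset.card_pos.2 (support_nonempty hr hα)
        obtain ⟨x, hx'⟩ := Finset.card_eq_one.1 (show α.support.card = 1 by omega)
        obtain ⟨k, hk⟩ := Finsupp.support_subset_singleton'.1 hx'.subset
        have hxT : x ∈ T := hsub (by rw [hx']; simp)
        rw [hk] at hsum
        refine hx ⟨x, ?_⟩
        rw [hk]
        congr 1
        rw [← hsum, Finset.sum_eq_single_of_mem x hxT]
        · simp
        · intro y _ hy
          simp [Ne.symm hy]
      have heq : α.support = T := Finset.eq_of_subset_of_card_le hsub (by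
        rw [(h.bary T hT).card]; omega)
      rw [heq, sub_self, abs_zero]
      exact mul_nonneg hJ.le (mul_nonneg Metric.diam_nonneg (errMean_nonneg _ _ _ _))
  choose b hb using hb
  refine ⟨b, fun T => {T}, ?_, ?_, ?_, ?_, ?_⟩
  · intro T hT α hα
    refine (hb α T hT hα).trans ?_
    rw [Finset.sum_singleton]
    have : 0 ≤ hdiam T * errMean p v (q T) T :=
      mul_nonneg Metric.diam_nonneg (errMean_nonneg _ _ _ _)
    gcongr
    linarith
  · exact fun T hT => Finset.singleton_subset_iff.2 hT
  · intro T hT S hS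
    rw [Finset.mem_singleton.1 hS]
    have := (h.bary T hT).hvol_pos
    nlinarith
  · intro T _
    simp [hJ.le]
  · intro S hS
    have : (𝒯.filter fun T => S ∈ ({T} : Finset (Finset (EuclideanSpace ℝ (Fin n))))) ⊆ {S} := by
      intro T hT
      simpa [eq_comm] using (Finset.mem_filter.1 hT).2
    have := Finset.card_le_card this
    rw [Finset.card_singleton] at this
    have : ((𝒯.filter fun T => S ∈ ({T} : Finset (Finset (EuclideanSpace ℝ (Fin n))))).card : ℝ)
      ≤ 1 := by exact_mod_cast this
    linarith

end

section

/-! ### The error of the conforming piecewise polynomial -/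

variable {n : ℕ}

lemma IsBary.polyFun_eq {T : Finset (EuclideanSpace ℝ (Fin n))} {β} (h : IsBary T β) {r : ℕ}
    {q : MvPolynomial (Fin n) ℝ} (hq : q.totalDegree ≤ r) (y : EuclideanSpace ℝ (Fin n)) :
    polyFun q y =
      ∑ α ∈ Finset.finsuppAntidiag T r, (homog T r q).coeff α * ∏ x ∈ T, β x y ^ α x := by
  rw [← eval_of_isHomogeneous (homog_isHomogeneous T hq) T (fun x => β x y)
    (fun x hx => by simp [h.off x hx]), eval_homog T r q _ (h.sum_one y), h.comb y]

lemma IsBary.fderiv_baryPoly_le {T : Finset (EuclideanSpace ℝ (Fin n))} {β} (h : IsBary T β)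
    (hn : 1 ≤ n) {M : ℝ} (hM : 0 < M) (hs : hdiam T ^ n ≤ M * hvol T) {r : ℕ}
    {q : MvPolynomial (Fin n) ℝ} (hq : q.totalDegree ≤ r)
    (b : (EuclideanSpace ℝ (Fin n) →₀ ℕ) → ℝ) {e : ℝ}
    (hb : ∀ α ∈ Finset.finsuppAntidiag T r, |(homog T r q).coeff α - b α| ≤ hdiam T * e)
    {y : EuclideanSpace ℝ (Fin n)} (hy : y ∈ hull T) :
    ‖fderiv ℝ (polyFun q) y - fderiv ℝ (polyFun (baryPoly T r β b)) y‖ ≤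
      Nat.choose (n + r) r * r * (2 ^ n * ballVol n * M) * e := by
  have hd := h.hdiam_pos hn
  have hb0 := ballVol_pos (n := n)
  have hfun : (fun z => polyFun q z - polyFun (baryPoly T r β b) z) =
      fun y => ∑ α ∈ Finset.finsuppAntidiag T r,
        ((homog T r q).coeff α - b α) * ∏ x ∈ T, β x y ^ α x := by
    funext z
    simp only [h.polyFun_eq hq z, polyFun, eval_baryPoly, sub_mul, Finset.sum_sub_distrib]
  rw [← fderiv_sub_polyFun (contDiff_eval q), hfun]
  refine (h.form_deriv (L := 2 ^ n * ballVol n * M / hdiam T) (by positivity)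
    (h.linear_bound hn hs) hy _ hb).trans (le_of_eq ?_)
  field_simp

lemma rpow_add_le {a b p : ℝ} (ha : 0 ≤ a) (hb : 0 ≤ b) (hp : 1 ≤ p) :
    (a + b) ^ p ≤ 2 ^ (p - 1) * (a ^ p + b ^ p) := by
  have := Real.rpow_sum_le_const_mul_sum_rpow_of_nonneg (s := (Finset.univ : Finset (Fin 2)))
    (f := ![a, b]) hp (by intro i _; fin_cases i <;> simpa)
  simpa using this

lemma errInt_le {v : EuclideanSpace ℝ (Fin n) → ℝ} (hv : ContDiff ℝ 1 v) {p : ℝ} (hp : 1 ≤ p)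
    {T : Finset (EuclideanSpace ℝ (Fin n))} (q w : MvPolynomial (Fin n) ℝ) {E : ℝ} (hE : 0 ≤ E)
    (h : ∀ y ∈ hull T, ‖fderiv ℝ (polyFun q) y - fderiv ℝ (polyFun w) y‖ ≤ E) :
    errInt p v w T ≤ 2 ^ (p - 1) * (errInt p v q T + hvol T * E ^ p) := by
  have hp0 : 0 ≤ p := by linarith
  have hc := IsBary.isCompact_hull T
  have hInt : ∀ q : MvPolynomial (Fin n) ℝ,
      IntegrableOn (fun y => ‖fderiv ℝ v y - fderiv ℝ (polyFun q) y‖ ^ p) (hull T) := fun q =>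
    (((continuous_fderiv_sub hv q).norm.rpow_const fun _ => Or.inr hp0).continuousOn
      ).integrableOn_compact hc
  have hconst : IntegrableOn (fun _ : EuclideanSpace ℝ (Fin n) => E ^ p) (hull T) :=
    continuousOn_const.integrableOn_compact hc
  calc errInt p v w T
      ≤ ∫ y in hull T, 2 ^ (p - 1) * (‖fderiv ℝ v y - fderiv ℝ (polyFun q) y‖ ^ p + E ^ p) := by
        refine setIntegral_mono_on (hInt w) (((hInt q).add hconst).const_mul _)
          hc.measurableSet fun y hy => ?_
        refine le_trans (Real.rpow_le_rpow (norm_nonneg _) ?_ hp0)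
          (rpow_add_le (norm_nonneg _) hE hp)
        calc _ = ‖(fderiv ℝ v y - fderiv ℝ (polyFun q) y) +
              (fderiv ℝ (polyFun q) y - fderiv ℝ (polyFun w) y)‖ := by congr 1; abel
          _ ≤ _ := (norm_add_le _ _).trans (by gcongr; exact h y hy)
    _ = _ := by
        rw [integral_const_mul, integral_add (hInt q) hconst, setIntegral_const]
        rfl

lemma hvol_mul_sum_le {C p : ℝ} (hC : 0 ≤ C) (hp : 1 ≤ p) {v : EuclideanSpace ℝ (Fin n) → ℝ}
    {q : Finset (EuclideanSpace ℝ (Fin n)) → MvPolynomial (Fin n) ℝ}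
    {T : Finset (EuclideanSpace ℝ (Fin n))} {P : Finset (Finset (EuclideanSpace ℝ (Fin n)))}
    (hpos : ∀ S ∈ P, 0 < hvol S) (hv : ∀ S ∈ P, hvol T ≤ C * hvol S) (hcard : (P.card : ℝ) ≤ C) :
    hvol T * (∑ S ∈ P, errMean p v (q S) S) ^ p ≤ C ^ p * ∑ S ∈ P, errInt p v (q S) S := by
  have hp0 : 0 < p := by linarith
  have hT : 0 ≤ hvol T := ENNReal.toReal_nonneg
  rcases hC.eq_or_lt with rfl | hC'
  · have : P = ∅ := Finset.card_eq_zero.1 (by exact_mod_cast le_antisymm hcard (Nat.cast_nonneg _))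
    subst this
    simp [Real.zero_rpow hp0.ne']
  calc hvol T * (∑ S ∈ P, errMean p v (q S) S) ^ p
      ≤ hvol T * (C ^ (p - 1) * ∑ S ∈ P, errMean p v (q S) S ^ p) := by
        gcongr
        refine (Real.rpow_sum_le_const_mul_sum_rpow_of_nonneg P hp
          fun S _ => errMean_nonneg _ _ _ _).trans ?_
        have : 0 ≤ ∑ S ∈ P, errMean p v (q S) S ^ p :=
          Finset.sum_nonneg fun S _ => Real.rpow_nonneg (errMean_nonneg _ _ _ _) _
        gcongr
    _ = C ^ (p - 1) * ∑ S ∈ P, hvol T * ((hvol S)⁻¹ * errInt p v (q S) S) := by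
        rw [← Finset.mul_sum]
        simp only [errMean_rpow hp0]
        ring
    _ ≤ C ^ (p - 1) * ∑ S ∈ P, C * errInt p v (q S) S := by
        refine mul_le_mul_of_nonneg_left (Finset.sum_le_sum fun S hS => ?_) (by positivity)
        have h1 := hpos S hS
        have h2 := errInt_nonneg p v (q S) S
        rw [← mul_assoc]
        gcongr
        rw [← div_eq_mul_inv, div_le_iff₀ h1]
        exact hv S hS
    _ = _ := by
        rw [← Finset.mul_sum, ← mul_assoc, ← Real.rpow_add_one hC'.ne', sub_add_cancel]

/-- Since patches are bounded in size and overlap, the errors of the polynomials with the global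
coefficients add up to a multiple of the errors of the given ones. -/
lemma exists_error_const (hn : 1 ≤ n) {r : ℕ} {p : ℝ} (hp : 1 ≤ p) {M : ℝ}
    (hM : 0 < M) {C : ℝ} (hC : 0 < C) : ∃ C' : ℝ, 0 < C' ∧
    ∀ 𝒯 β, IsMesh (n := n) M 𝒯 β → ∀ v : EuclideanSpace ℝ (Fin n) → ℝ, ContDiff ℝ 1 v →
    ∀ q : Finset (EuclideanSpace ℝ (Fin n)) → MvPolynomial (Fin n) ℝ,
    (∀ T ∈ 𝒯, (q T).totalDegree ≤ r) → CoeffApprox C p r 𝒯 v q →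
    ∃ b : (EuclideanSpace ℝ (Fin n) →₀ ℕ) → ℝ,
      ∑ T ∈ 𝒯, errInt p v (baryPoly T r (β T) b) T ≤ C' * ∑ T ∈ 𝒯, errInt p v (q T) T := by
  have hb0 := ballVol_pos (n := n)
  set A : ℝ := Nat.choose (n + r) r * r * (2 ^ n * ballVol n * M) * C with hA
  have hA0 : 0 ≤ A := by positivity
  have hp0 : 0 ≤ p := by linarith
  have hpow : (0 : ℝ) < 2 ^ (p - 1) := by positivity
  refine ⟨2 ^ (p - 1) * (1 + A ^ p * (C ^ p * C)), by positivity,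
    fun 𝒯 β h v hv q hq ⟨b, patch, h1, h2, h3, h4, h5⟩ => ⟨b, ?_⟩⟩
  have hloc : ∀ T ∈ 𝒯, errInt p v (baryPoly T r (β T) b) T ≤
      2 ^ (p - 1) * (errInt p v (q T) T +
        A ^ p * (C ^ p * ∑ S ∈ patch T, errInt p v (q S) S)) := by
    intro T hT
    have hs0 : 0 ≤ ∑ S ∈ patch T, errMean p v (q S) S :=
      Finset.sum_nonneg fun S _ => errMean_nonneg _ _ _ _
    refine (errInt_le hv hp (q T) _ (E := A * ∑ S ∈ patch T, errMean p v (q S) S)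
      (by positivity) fun y hy => ?_).trans ?_
    · refine ((h.bary T hT).fderiv_baryPoly_le hn hM (h.shape T hT) (hq T hT) b
        (e := C * ∑ S ∈ patch T, errMean p v (q S) S) (fun α hα => ?_) hy).trans (le_of_eq ?_)
      · refine (h1 T hT α hα).trans (le_of_eq (by ring))
      · rw [hA]; ring
    · rw [Real.mul_rpow hA0 hs0, mul_left_comm]
      have := hvol_mul_sum_le hC.le hp (v := v) (q := q)
        (fun S hS => (h.bary S (h2 T hT hS)).hvol_pos) (h3 T hT) (h4 T hT)
      gcongr
  have hover : ∑ T ∈ 𝒯, ∑ S ∈ patch T, errInt p v (q S) S ≤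
      C * ∑ S ∈ 𝒯, errInt p v (q S) S := by
    rw [Finset.sum_comm' (t' := 𝒯) (s' := fun S => 𝒯.filter fun T => S ∈ patch T)
      (fun T S => by
        rw [Finset.mem_filter]
        exact ⟨fun ⟨a, b⟩ => ⟨⟨a, b⟩, h2 T a b⟩, fun ⟨a, _⟩ => a⟩), Finset.mul_sum]
    refine Finset.sum_le_sum fun S hS => ?_
    rw [Finset.sum_const, nsmul_eq_mul]
    have := errInt_nonneg p v (q S) S
    gcongr
    exact h5 S hS
  calc _ ≤ ∑ T ∈ 𝒯, 2 ^ (p - 1) * (errInt p v (q T) T +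
        A ^ p * (C ^ p * ∑ S ∈ patch T, errInt p v (q S) S)) := Finset.sum_le_sum hloc
    _ = 2 ^ (p - 1) * (∑ T ∈ 𝒯, errInt p v (q T) T +
        A ^ p * (C ^ p * ∑ T ∈ 𝒯, ∑ S ∈ patch T, errInt p v (q S) S)) := by
        rw [← Finset.mul_sum, Finset.sum_add_distrib, ← Finset.mul_sum, ← Finset.mul_sum]
    _ ≤ 2 ^ (p - 1) * (∑ T ∈ 𝒯, errInt p v (q T) T +
        A ^ p * (C ^ p * (C * ∑ S ∈ 𝒯, errInt p v (q S) S))) := by gcongr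
    _ = _ := by ring

end

section

/-! ### Gluing -/

variable {n : ℕ}

/-- Monomials that contain a vertex whose coordinate vanishes at the given point do not contribute
to the value there. -/
lemma sum_finsuppAntidiag_eq {U S : Finset (EuclideanSpace ℝ (Fin n))} (hUS : U ⊆ S) {r : ℕ}
    (Λ : EuclideanSpace ℝ (Fin n) → ℝ) (hΛ : ∀ x, x ∉ U → Λ x = 0)
    (b : (EuclideanSpace ℝ (Fin n) →₀ ℕ) → ℝ) :
    ∑ α ∈ Finset.finsuppAntidiag S r, b α * ∏ x ∈ S, Λ x ^ α x =
      ∑ α ∈ Finset.finsuppAntidiag U r, b α * ∏ x ∈ U, Λ x ^ α x := by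
  symm
  rw [← Finset.sum_subset (Finset.finsuppAntidiag_mono hUS r)]
  · refine Finset.sum_congr rfl fun α hα => ?_
    congr 1
    refine Finset.prod_subset hUS fun x _ hx => ?_
    have : α x = 0 := Finsupp.notMem_support_iff.1
      fun h => hx ((Finset.mem_finsuppAntidiag.1 hα).2 h)
    rw [this, pow_zero]
  · intro α hαS hαU
    rw [Finset.mem_finsuppAntidiag] at hαS
    have hns : ¬ α.support ⊆ U := by
      intro hsub
      refine hαU (Finset.mem_finsuppAntidiag.2 ⟨?_, hsub⟩)
      rw [← hαS.1, ← Finset.sum_subset hsub (fun x _ hx => Finsupp.notMem_support_iff.1 hx),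
        Finset.sum_subset hαS.2 (fun x _ hx => Finsupp.notMem_support_iff.1 hx)]
    obtain ⟨x, hx, hxU⟩ := Finset.not_subset.1 hns
    rw [Finset.prod_eq_zero (hαS.2 hx), mul_zero]
    rw [hΛ x hxU, zero_pow (Finsupp.mem_support_iff.1 hx)]

lemma IsMesh.baryPoly_agree {M : ℝ} {𝒯 : Finset (Finset (EuclideanSpace ℝ (Fin n)))} {β}
    (h : IsMesh M 𝒯 β) {r : ℕ} (b : (EuclideanSpace ℝ (Fin n) →₀ ℕ) → ℝ)
    {S T : Finset (EuclideanSpace ℝ (Fin n))} (hS : S ∈ 𝒯) (hT : T ∈ 𝒯)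
    {y : EuclideanSpace ℝ (Fin n)} (hyS : y ∈ hull S) (hyT : y ∈ hull T) :
    polyFun (baryPoly S r (β S) b) y = polyFun (baryPoly T r (β T) b) y := by
  have hc : ∀ x, β S x y = β T x y :=
    (h.bary S hS).consistent (h.bary T hT) (h.inter S hS T hT ⟨hyS, hyT⟩)
  have hoff : ∀ x, x ∉ S ∩ T → β T x y = 0 := by
    intro x hx
    rw [Finset.mem_inter, not_and_or] at hx
    rcases hx with hx | hx
    · rw [← hc, (h.bary S hS).off x hx]; rfl
    · rw [(h.bary T hT).off x hx]; rfl
  simp only [polyFun, eval_baryPoly, hc]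
  rw [sum_finsuppAntidiag_eq Finset.inter_subset_left (fun x => β T x y) hoff b,
    sum_finsuppAntidiag_eq Finset.inter_subset_right (fun x => β T x y) hoff b]

/-- Polynomials with common coefficients in barycentric coordinates glue to a continuous
function. -/
lemma IsMesh.exists_glue {M : ℝ} {𝒯 : Finset (Finset (EuclideanSpace ℝ (Fin n)))} {β}
    (h : IsMesh M 𝒯 β) (r : ℕ) (b : (EuclideanSpace ℝ (Fin n) →₀ ℕ) → ℝ) :
    ∃ w : EuclideanSpace ℝ (Fin n) → ℝ, ContinuousOn w (⋃ T : 𝒯, hull T.1) ∧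
      ∀ T ∈ 𝒯, ∀ y ∈ hull T, w y = polyFun (baryPoly T r (β T) b) y := by
  have hex : ∀ y : EuclideanSpace ℝ (Fin n), ∃ t : ℝ, ∀ T ∈ 𝒯, y ∈ hull T →
      t = polyFun (baryPoly T r (β T) b) y := by
    intro y
    by_cases hy : ∃ S ∈ 𝒯, y ∈ hull S
    · obtain ⟨S, hS, hyS⟩ := hy
      exact ⟨_, fun T hT hyT => h.baryPoly_agree b hS hT hyS hyT⟩
    · exact ⟨0, fun T hT hyT => absurd ⟨T, hT, hyT⟩ hy⟩
  choose w hw using hex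
  refine ⟨w, ?_, fun T hT y hy => hw y T hT hy⟩
  refine (locallyFinite_of_finite _).continuousOn_iUnion
    (fun T => (IsBary.isCompact_hull T.1).isClosed) fun T => ?_
  exact (contDiff_eval _).continuous.continuousOn.congr fun y hy => hw y T T.2 hy

/-! ### Extension of the given function -/

/-- A `C¹` function near a closed set has the same derivative on that set as some `C¹` function on
`ℝⁿ`. -/
lemma exists_contDiff_extension {A U : Set (EuclideanSpace ℝ (Fin n))} (hA : IsClosed A)
    (hU : IsOpen U) (hAU : A ⊆ U) {v : EuclideanSpace ℝ (Fin n) → ℝ} (hv : ContDiffOn ℝ 1 v U) :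
    ∃ u : EuclideanSpace ℝ (Fin n) → ℝ, ContDiff ℝ 1 u ∧ ∀ y ∈ A, fderiv ℝ u y = fderiv ℝ v y := by
  have hd : Disjoint Uᶜ A := Set.disjoint_compl_left_iff_subset.2 hAU
  obtain ⟨f, hf0, hf1, -⟩ := exists_contMDiffMap_zero_one_nhds_of_isClosed (n := 1)
    (modelWithCornersSelf ℝ (EuclideanSpace ℝ (Fin n))) hU.isClosed_compl hA hd
  have hf : ContDiff ℝ 1 f := f.contMDiff.contDiff
  refine ⟨fun y => f y * v y, contDiff_iff_contDiffAt.2 fun y => ?_, fun y hy => ?_⟩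
  · by_cases hy : y ∈ U
    · exact hf.contDiffAt.mul (hv.contDiffAt (hU.mem_nhds hy))
    · have h1 := hf0.filter_mono (nhds_le_nhdsSet (show y ∈ Uᶜ from hy))
      refine (contDiffAt_const (c := (0 : ℝ))).congr_of_eventuallyEq ?_
      filter_upwards [h1] with z hz
      rw [hz, zero_mul]
  · refine Filter.EventuallyEq.fderiv_eq ?_
    filter_upwards [hf1.filter_mono (nhds_le_nhdsSet hy)] with z hz
    rw [hz, one_mul]

end

/-! ### The estimate on a mesh and on a complex -/

section
variable {n : ℕ}

/-- The estimate for given polynomials on the simplices, with an explicit conforming competitor. -/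
lemma exists_mesh_const (hn : 1 ≤ n) {r : ℕ} (hr : 1 ≤ r) {p : ℝ} (hp : 1 ≤ p) {M : ℝ}
    (hM : 0 < M) : ∃ C : ℝ, 0 < C ∧
    ∀ 𝒯 β, IsMesh (n := n) M 𝒯 β → ∀ v : EuclideanSpace ℝ (Fin n) → ℝ, ContDiff ℝ 1 v →
    ∀ q : Finset (EuclideanSpace ℝ (Fin n)) → MvPolynomial (Fin n) ℝ,
    (∀ T ∈ 𝒯, (q T).totalDegree ≤ r) →
    ∃ b : (EuclideanSpace ℝ (Fin n) →₀ ℕ) → ℝ,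
      ∑ T ∈ 𝒯, errInt p v (baryPoly T r (β T) b) T ≤ C * ∑ T ∈ 𝒯, errInt p v (q T) T := by
  have hcoeff : ∃ C : ℝ, 0 < C ∧
      ∀ 𝒯 β, IsMesh (n := n) M 𝒯 β → ∀ v : EuclideanSpace ℝ (Fin n) → ℝ, ContDiff ℝ 1 v →
      ∀ q : Finset (EuclideanSpace ℝ (Fin n)) → MvPolynomial (Fin n) ℝ,
      (∀ T ∈ 𝒯, (q T).totalDegree ≤ r) → (∀ T ∈ 𝒯, Normalized v (q T) T) →
      CoeffApprox C p r 𝒯 v q := by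
    rcases hn.eq_or_lt with h1 | h2
    · exact exists_coeffApprox_of_eq_one h1.symm hr hp
    · exact exists_coeffApprox_of_two_le h2 hr hp hM
  obtain ⟨C₀, hC₀, hcoeff⟩ := hcoeff
  obtain ⟨C, hC, herr⟩ := exists_error_const hn (r := r) hp hM hC₀
  refine ⟨C, hC, fun 𝒯 β h v hv q hq => ?_⟩
  have hnorm : ∀ T, ∃ q' : MvPolynomial (Fin n) ℝ, T ∈ 𝒯 →
      q'.totalDegree ≤ r ∧ Normalized v q' T ∧ errInt p v q' T = errInt p v (q T) T := by
    intro T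
    by_cases hT : T ∈ 𝒯
    · obtain ⟨q', hq'⟩ := exists_normalized hv (hq T hT) (h.bary T hT) p
      exact ⟨q', fun _ => hq'⟩
    · exact ⟨0, fun h => absurd h hT⟩
  choose q' hq' using hnorm
  obtain ⟨b, hb⟩ := herr 𝒯 β h v hv q' (fun T hT => (hq' T hT).1)
    (hcoeff 𝒯 β h v hv q' (fun T hT => (hq' T hT).1) fun T hT => (hq' T hT).2.1)
  refine ⟨b, hb.trans (le_of_eq ?_)⟩
  congr 1
  exact Finset.sum_congr rfl fun T hT => (hq' T hT).2.2

/-- The `n`-simplices of a complex as in the theorem form a mesh. -/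
lemma exists_isMesh {κ μ₀ : ℝ} (hμ₀ : 0 < μ₀)
    (hκ : ∀ (T : Finset (EuclideanSpace ℝ (Fin n))) β, IsBary T β → ∀ μ₀ : ℝ, 0 < μ₀ →
      Metric.diam (convexHull ℝ (T : Set (EuclideanSpace ℝ (Fin n)))) ^ (T.card - 1) /
            (μH[((T.card : ℝ) - 1)]
              (convexHull ℝ (T : Set (EuclideanSpace ℝ (Fin n))))).toReal ≤ μ₀ →
      hdiam T ^ n ≤ κ * μ₀ * hvol T)
    (K : Geometry.SimplicialComplex ℝ (EuclideanSpace ℝ (Fin n))) (hKfin : K.faces.Finite)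
    (hK : FaceConnected n K)
    (hs : ∀ s ∈ K.faces,
          Metric.diam (convexHull ℝ (s : Set (EuclideanSpace ℝ (Fin n)))) ^ (s.card - 1) /
            (μH[((s.card : ℝ) - 1)]
              (convexHull ℝ (s : Set (EuclideanSpace ℝ (Fin n))))).toReal ≤ μ₀) :
    ∃ β, IsMesh (κ * μ₀) (hKfin.toFinset.filter fun s => s.card = n + 1) β := by
  have hmem : ∀ T, T ∈ (hKfin.toFinset.filter fun s => s.card = n + 1) ↔
      T ∈ K.faces ∧ T.card = n + 1 := fun T => by simp
  have hβ : ∀ T : Finset (EuclideanSpace ℝ (Fin n)), ∃ β,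
      T ∈ K.faces ∧ T.card = n + 1 → IsBary T β := by
    intro T
    by_cases hT : T ∈ K.faces ∧ T.card = n + 1
    · obtain ⟨β, h⟩ := exists_isBary T (K.indep hT.1) hT.2
      exact ⟨β, fun _ => h⟩
    · exact ⟨0, fun h => absurd h hT⟩
  choose β hβ using hβ
  refine ⟨β, fun T hT => hβ T ((hmem T).1 hT), fun T hT => ?_, fun S hS T hT => ?_,
    fun S hS T hT hne => ?_⟩
  · exact hκ T _ (hβ T ((hmem T).1 hT)) μ₀ hμ₀ (hs T ((hmem T).1 hT).1)
  · exact K.inter_subset_convexHull ((hmem S).1 hS).1 ((hmem T).1 hT).1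
  · rw [hmem] at hS hT
    obtain ⟨x, hx⟩ := hne
    rw [Finset.mem_inter] at hx
    obtain ⟨N, c, h0, hl, hc, hcc⟩ := hK S T hS.1 hT.1 hS.2 hT.2
      ⟨x, subset_convexHull ℝ _ hx.1, subset_convexHull ℝ _ hx.2⟩
    exact ⟨N, c, h0, hl, fun i => (hmem _).2 (hc i), hcc⟩

end

/-- **Broken Bramble–Hilbert lemma in the `W^{1,p}` seminorm.**
For `n ≥ 1`, `p ∈ [1,∞)`, `r ≥ 1` and `μ₀ > 0` there is `C > 0`, depending only
on `n, p, r, μ₀`, such that for every finite, face-connected simplicial complex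
`𝒯` in `ℝⁿ` in which every simplex is a face of an `n`-simplex and every simplex
has shape measure at most `μ₀`, with `Ω` the interior of the union of its
simplices, and every `C¹` function `v` on a neighborhood of the closure of `Ω`:
the best approximation error of `v` in the broken `W^{1,p}` seminorm by
continuous piecewise polynomials of degree ≤ r is at most `C` times the best
approximation error by fully discontinuous piecewise polynomials of degree ≤ r. -/
theorem broken_bramble_hilbert
    (n : ℕ) (hn : 1 ≤ n) (p : ℝ) (hp : 1 ≤ p) (r : ℕ) (hr : 1 ≤ r)
    (μ₀ : ℝ) (hμ₀ : 0 < μ₀) :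
    ∃ C > 0,
      ∀ K : Geometry.SimplicialComplex ℝ (EuclideanSpace ℝ (Fin n)),
      ∀ hKfin : K.faces.Finite,
        FaceConnected n K →
        (∀ s ∈ K.faces, ∃ t ∈ K.faces, t.card = n + 1 ∧ s ⊆ t) →
        (∀ s ∈ K.faces,
          Metric.diam (convexHull ℝ (s : Set (EuclideanSpace ℝ (Fin n)))) ^ (s.card - 1) /
            (μH[((s.card : ℝ) - 1)]
              (convexHull ℝ (s : Set (EuclideanSpace ℝ (Fin n))))).toReal ≤ μ₀) →
        ∀ v : EuclideanSpace ℝ (Fin n) → ℝ,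
          (∃ U : Set (EuclideanSpace ℝ (Fin n)), IsOpen U ∧
            closure (interior (⋃ s ∈ K.faces,
              convexHull ℝ (s : Set (EuclideanSpace ℝ (Fin n))))) ⊆ U ∧
            ContDiffOn ℝ 1 v U) →
          sInf {t : ℝ | ∃ (w : EuclideanSpace ℝ (Fin n) → ℝ)
              (q : Finset (EuclideanSpace ℝ (Fin n)) → MvPolynomial (Fin n) ℝ),
              ContinuousOn w (closure (interior (⋃ s ∈ K.faces,
                convexHull ℝ (s : Set (EuclideanSpace ℝ (Fin n)))))) ∧
              (∀ s ∈ K.faces, s.card = n + 1 →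
                (q s).totalDegree ≤ r ∧
                ∀ y ∈ convexHull ℝ (s : Set (EuclideanSpace ℝ (Fin n))),
                  w y = MvPolynomial.eval (fun i => y i) (q s)) ∧
              t = (∑ s ∈ hKfin.toFinset.filter (fun s => s.card = n + 1),
                    ∫ y in convexHull ℝ (s : Set (EuclideanSpace ℝ (Fin n))),
                      ‖fderiv ℝ v y -
                        fderiv ℝ (fun z => MvPolynomial.eval (fun i => z i) (q s)) y‖ ^ p) ^
                  (1 / p)} ≤
            C * (∑ s ∈ hKfin.toFinset.filter (fun s => s.card = n + 1),
                  sInf {t : ℝ | ∃ q₀ : MvPolynomial (Fin n) ℝ, q₀.totalDegree ≤ r ∧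
                    t = ∫ y in convexHull ℝ (s : Set (EuclideanSpace ℝ (Fin n))),
                      ‖fderiv ℝ v y -
                        fderiv ℝ (fun z => MvPolynomial.eval (fun i => z i) q₀) y‖ ^ p}) ^
                (1 / p) := by
  have hp0 : 0 < p := by linarith
  obtain ⟨κ, hκ0, hκ⟩ := exists_shape_const n
  obtain ⟨C, hC, hmesh⟩ := exists_mesh_const hn hr hp (mul_pos hκ0 hμ₀)
  refine ⟨C ^ (1 / p), Real.rpow_pos_of_pos hC _, ?_⟩
  intro K hKfin hK hpure hs v ⟨U, hU, hΩU, hvU⟩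
  obtain ⟨β, hβ⟩ := exists_isMesh hμ₀ hκ K hKfin hK hs
  set 𝒯 := hKfin.toFinset.filter fun s => s.card = n + 1 with h𝒯
  set Ω := interior (⋃ s ∈ K.faces, convexHull ℝ (s : Set (EuclideanSpace ℝ (Fin n)))) with hΩ
  have hmem : ∀ T, T ∈ 𝒯 ↔ T ∈ K.faces ∧ T.card = n + 1 := fun T => by simp [h𝒯]
  -- `n`-simplices have nonempty interior, so they lie in the closure of `Ω`
  have hsub : ∀ T ∈ 𝒯, hull T ⊆ closure Ω := by
    intro T hT
    have h1 := (convex_convexHull ℝ (T : Set (EuclideanSpace ℝ (Fin n))))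
      |>.closure_interior_eq_closure_of_nonempty_interior (hβ.bary T hT).interior_nonempty
    refine (subset_closure.trans h1.ge).trans (closure_mono (interior_mono ?_))
    exact Set.subset_biUnion_of_mem
      (u := fun s : Finset _ => convexHull ℝ (s : Set (EuclideanSpace ℝ (Fin n))))
      ((hmem T).1 hT).1
  have hsup : closure Ω ⊆ ⋃ T : 𝒯, hull T.1 := by
    have hcl : IsClosed (⋃ T : 𝒯, hull T.1) :=
      isClosed_iUnion_of_finite fun T => (IsBary.isCompact_hull T.1).isClosed
    refine closure_minimal (interior_subset.trans (Set.iUnion₂_subset fun s hs => ?_)) hcl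
    obtain ⟨t, ht, htc, hst⟩ := hpure s hs
    exact (convexHull_mono (by exact_mod_cast hst)).trans
      (Set.subset_iUnion (fun T : 𝒯 => hull T.1) ⟨t, (hmem t).2 ⟨ht, htc⟩⟩)
  obtain ⟨u, hu, huv⟩ := exists_contDiff_extension isClosed_closure hU hΩU hvU
  have herr : ∀ T ∈ 𝒯, ∀ q : MvPolynomial (Fin n) ℝ, errInt p v q T = errInt p u q T := by
    intro T hT q
    refine setIntegral_congr_fun (IsBary.isCompact_hull T).measurableSet fun y hy => ?_
    simp only [huv y (hsub T hT hy)]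
  set E : Finset (EuclideanSpace ℝ (Fin n)) → Set ℝ := fun s =>
    {t : ℝ | ∃ q₀ : MvPolynomial (Fin n) ℝ, q₀.totalDegree ≤ r ∧ t = errInt p v q₀ s} with hE
  set L : Set ℝ := {t : ℝ | ∃ (w : EuclideanSpace ℝ (Fin n) → ℝ)
      (q : Finset (EuclideanSpace ℝ (Fin n)) → MvPolynomial (Fin n) ℝ),
      ContinuousOn w (closure Ω) ∧
      (∀ s ∈ K.faces, s.card = n + 1 → (q s).totalDegree ≤ r ∧
        ∀ y ∈ convexHull ℝ (s : Set (EuclideanSpace ℝ (Fin n))),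
          w y = MvPolynomial.eval (fun i => y i) (q s)) ∧
      t = (∑ s ∈ 𝒯, errInt p v (q s) s) ^ (1 / p)} with hL
  change sInf L ≤ C ^ (1 / p) * (∑ s ∈ 𝒯, sInf (E s)) ^ (1 / p)
  have hE0 : 0 ≤ ∑ s ∈ 𝒯, sInf (E s) := Finset.sum_nonneg fun s _ =>
    Real.sInf_nonneg (by rintro t ⟨q, -, rfl⟩; exact errInt_nonneg _ _ _ _)
  have hLbdd : BddBelow L := ⟨0, by
    rintro t ⟨w, q, -, -, rfl⟩
    exact Real.rpow_nonneg (Finset.sum_nonneg fun s _ => errInt_nonneg _ _ _ _) _⟩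
  -- choose `q T` optimal up to `ε`
  have key : ∀ ε : ℝ, 0 < ε → sInf L ≤ (C * ∑ s ∈ 𝒯, (sInf (E s) + ε)) ^ (1 / p) := by
    intro ε hε
    have hq : ∀ T, ∃ q : MvPolynomial (Fin n) ℝ, q.totalDegree ≤ r ∧
        errInt p v q T ≤ sInf (E T) + ε := by
      intro T
      obtain ⟨t, ⟨q, hq, rfl⟩, ht⟩ := exists_lt_of_csInf_lt
        (⟨_, 0, by simp, rfl⟩ : (E T).Nonempty) (lt_add_of_pos_right (sInf (E T)) hε)
      exact ⟨q, hq, ht.le⟩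
    choose q hq hqε using hq
    obtain ⟨b, hb⟩ := hmesh 𝒯 β hβ u hu q fun T _ => hq T
    obtain ⟨w, hw, hwT⟩ := hβ.exists_glue r b
    refine (csInf_le hLbdd ⟨w, fun T => baryPoly T r (β T) b, hw.mono hsup,
      fun s hs hc => ⟨baryPoly_totalDegree _ _ _ _, hwT s ((hmem s).2 ⟨hs, hc⟩)⟩, rfl⟩).trans ?_
    refine Real.rpow_le_rpow (Finset.sum_nonneg fun s _ => errInt_nonneg _ _ _ _) ?_
      (by positivity)
    calc ∑ s ∈ 𝒯, errInt p v (baryPoly s r (β s) b) s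
        = ∑ s ∈ 𝒯, errInt p u (baryPoly s r (β s) b) s :=
          Finset.sum_congr rfl fun s hs => herr s hs _
      _ ≤ C * ∑ s ∈ 𝒯, errInt p u (q s) s := hb
      _ ≤ C * ∑ s ∈ 𝒯, (sInf (E s) + ε) := by
          refine mul_le_mul_of_nonneg_left (Finset.sum_le_sum fun s hs => ?_) hC.le
          rw [← herr s hs]
          exact hqε s
  rw [← Real.mul_rpow hC.le hE0]
  have hlim : Filter.Tendsto (fun ε : ℝ => (C * ∑ s ∈ 𝒯, (sInf (E s) + ε)) ^ (1 / p))
      (nhdsWithin 0 (Set.Ioi 0)) (nhds ((C * ∑ s ∈ 𝒯, sInf (E s)) ^ (1 / p))) := by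
    have hc : Continuous fun ε : ℝ => (C * ∑ s ∈ 𝒯, (sInf (E s) + ε)) ^ (1 / p) :=
      Continuous.rpow_const (by fun_prop) fun _ => Or.inr (by positivity)
    have := hc.tendsto 0
    simp only [add_zero] at this
    exact this.mono_left nhdsWithin_le_nhds
  exact ge_of_tendsto hlim (eventually_nhdsWithin_of_forall key)
end

section
/- Let n ≥ 2. Define the parametric annulus Â = { x ∈ ℝⁿ : 1/2 < ‖x‖₁ < 1 } (where ‖x‖₁ = Σ|xᵢ| is the ℓ¹ norm) and the physical annulus Ă = { x ∈ ℝⁿ : 1/2 < ‖x‖₂ < 1 } (where ‖x‖₂ is the Euclidean norm). Then the map Φ : Â → ℝⁿ, Φ(x) = ( ‖x‖₁ / ‖x‖₂ ) · x, is a bijection from Â onto Ă, and both Φ and its inverse are Lipschitz continuous; in particular, Φ is a bi-Lipschitz homeomorphism from the Manhattan-metric annulus onto the Euclidean annulus. -/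
/-!
For two seminorms `p`, `q`, the radial rescaling `R p q x = (p x / q x) • x` satisfies
`q (R p q x) = p x` wherever `q x ≠ 0`. Hence `R q p` undoes `R p q` away from the zeros of `p` and `q`,
and `R p q` carries an annulus of `p` onto the same annulus of `q`
(`radialRescale_apply`, `radialRescale_radialRescale`).

If moreover `p ≤ a‖·‖` and `‖·‖ ≤ q ≤ c‖·‖`, then `R p q` is Lipschitz on the set `q > 0` with constant
`2a + ac`, by splitting
`R p q x - R p q y = (p x / q x) • (x - y) + (p x / q x - p y / q y) • y`
(`lipschitzOnWith_radialRescale`). The theorem is the case of the `ℓ¹` and the Euclidean norm,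
where `‖x‖₂ ≤ ‖x‖₁ ≤ n ‖x‖₂`, used once in each direction.
-/

section RadialRescaling

variable {E : Type*} [NormedAddCommGroup E] [NormedSpace ℝ E]

/-- The map that moves `x` along its ray so that its `q`-value becomes `p x`. It is `0` where
`q x = 0`. -/
noncomputable def radialRescale (p q : Seminorm ℝ E) (x : E) : E := (p x / q x) • x

lemma radialRescale_apply (p q : Seminorm ℝ E) {x : E} (hq : 0 < q x) :
    q (radialRescale p q x) = p x := by
  rw [radialRescale, map_smul_eq_mul, Real.norm_of_nonneg (div_nonneg (apply_nonneg p x) hq.le),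
    div_mul_cancel₀ _ hq.ne']

lemma radialRescale_radialRescale (p q : Seminorm ℝ E) {x : E} (hp : 0 < p x) (hq : 0 < q x) :
    radialRescale q p (radialRescale p q x) = x := by
  have h : p (radialRescale p q x) = p x / q x * p x := by
    rw [radialRescale, map_smul_eq_mul, Real.norm_of_nonneg (div_nonneg hp.le hq.le)]
  rw [radialRescale, h, radialRescale_apply p q hq, radialRescale, smul_smul]
  have : p x / (p x / q x * p x) * (p x / q x) = 1 := by
    field_simp
  rw [this, one_smul]

lemma Seminorm.abs_sub_le_of_bound (p : Seminorm ℝ E) {a : ℝ} (h : ∀ x, p x ≤ a * ‖x‖) (x y : E) :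
    |p x - p y| ≤ a * ‖x - y‖ :=
  (abs_sub_map_le_sub p x y).trans (h _)

lemma lipschitzOnWith_radialRescale (p q : Seminorm ℝ E) {a c : NNReal}
    (hp : ∀ x, p x ≤ a * ‖x‖) (hq : ∀ x, ‖x‖ ≤ q x) (hq' : ∀ x, q x ≤ c * ‖x‖) :
    LipschitzOnWith (2 * a + a * c) (radialRescale p q) {x | 0 < q x} := by
  refine LipschitzOnWith.of_dist_le_mul fun x hx y hy => ?_
  simp only [Set.mem_ofPred_eq] at hx hy
  rw [dist_eq_norm, dist_eq_norm]
  have hsplit : radialRescale p q x - radialRescale p q y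
      = (p x / q x) • (x - y) + (p x / q x - p y / q y) • y := by
    simp only [radialRescale]
    module
  have hratio : p x / q x ≤ a := by
    rw [div_le_iff₀ hx]
    exact (hp x).trans (mul_le_mul_of_nonneg_left (hq x) a.2)
  have hratio0 : 0 ≤ p x / q x := div_nonneg (apply_nonneg p x) hx.le
  have hdiff : p x / q x - p y / q y = ((p x - p y) + p x / q x * (q y - q x)) / q y := by
    field_simp
    ring
  have hnum : |(p x - p y) + p x / q x * (q y - q x)| ≤ (a + a * c) * ‖x - y‖ := by
    calc |(p x - p y) + p x / q x * (q y - q x)|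
        ≤ |p x - p y| + p x / q x * |q y - q x| := by
          refine (abs_add_le _ _).trans_eq ?_
          rw [abs_mul, abs_of_nonneg hratio0]
      _ ≤ a * ‖x - y‖ + a * (c * ‖x - y‖) := by
          gcongr
          · exact p.abs_sub_le_of_bound hp x y
          · rw [norm_sub_rev]
            exact q.abs_sub_le_of_bound hq' y x
      _ = _ := by ring
  have hsecond : ‖(p x / q x - p y / q y) • y‖ ≤ (a + a * c) * ‖x - y‖ := by
    rw [norm_smul, Real.norm_eq_abs, hdiff, abs_div, abs_of_pos hy, div_mul_eq_mul_div,
      div_le_iff₀ hy]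
    exact mul_le_mul hnum (hq y) (norm_nonneg _) (by positivity)
  have hfirst : ‖(p x / q x) • (x - y)‖ ≤ a * ‖x - y‖ := by
    rw [norm_smul, Real.norm_of_nonneg hratio0]
    gcongr
  rw [hsplit]
  refine (norm_add_le _ _).trans ((add_le_add hfirst hsecond).trans_eq ?_)
  push_cast
  ring

end RadialRescaling

/-- The `ℓ¹` norm, as a seminorm on Euclidean space. -/
noncomputable def l1Seminorm (n : ℕ) : Seminorm ℝ (EuclideanSpace ℝ (Fin n)) :=
  Seminorm.of (fun x => ∑ i, |x i|)
    (fun x y => by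
      rw [← Finset.sum_add_distrib]
      exact Finset.sum_le_sum fun i _ => abs_add_le (x i) (y i))
    (fun r x => by simp [Finset.mul_sum, abs_mul])

lemma l1Seminorm_apply {n : ℕ} (x : EuclideanSpace ℝ (Fin n)) :
    l1Seminorm n x = ∑ i, |x i| := rfl

lemma l1Seminorm_le {n : ℕ} (x : EuclideanSpace ℝ (Fin n)) : l1Seminorm n x ≤ n * ‖x‖ := by
  rw [l1Seminorm_apply]
  refine (Finset.sum_le_card_nsmul _ _ ‖x‖ fun i _ => PiLp.norm_apply_le x i).trans_eq ?_
  simp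

lemma norm_le_l1Seminorm {n : ℕ} (x : EuclideanSpace ℝ (Fin n)) : ‖x‖ ≤ l1Seminorm n x := by
  rw [EuclideanSpace.norm_eq, l1Seminorm_apply]
  refine Real.sqrt_le_iff.2 ⟨Finset.sum_nonneg fun i _ => abs_nonneg _, ?_⟩
  simp only [Real.norm_eq_abs]
  exact Finset.sum_sq_le_sq_sum_of_nonneg fun i _ => abs_nonneg _

/-- **The annulus transformation is bi-Lipschitz.**
Let `n ≥ 2`, let `Â = { x : 1/2 < ‖x‖₁ < 1 }` be the parametric (Manhattan)
annulus and `Ă = { x : 1/2 < ‖x‖₂ < 1 }` the physical (Euclidean) annulus.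
Then `Φ(x) = (‖x‖₁/‖x‖₂) • x` is a bijection of `Â` onto `Ă`, `Φ` is Lipschitz
on `Â`, and it has an inverse that is Lipschitz on `Ă`; in particular `Φ` is a
bi-Lipschitz homeomorphism of the annuli. -/
theorem annulus_transformation_biLipschitz (n : ℕ) (hn : 2 ≤ n) :
    Set.BijOn
        (fun x : EuclideanSpace ℝ (Fin n) => ((∑ i, |x i|) / ‖x‖) • x)
        {x : EuclideanSpace ℝ (Fin n) | 1 / 2 < ∑ i, |x i| ∧ ∑ i, |x i| < 1}
        {x : EuclideanSpace ℝ (Fin n) | 1 / 2 < ‖x‖ ∧ ‖x‖ < 1} ∧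
      (∃ K : NNReal,
        LipschitzOnWith K
          (fun x : EuclideanSpace ℝ (Fin n) => ((∑ i, |x i|) / ‖x‖) • x)
          {x : EuclideanSpace ℝ (Fin n) | 1 / 2 < ∑ i, |x i| ∧ ∑ i, |x i| < 1}) ∧
      ∃ g : EuclideanSpace ℝ (Fin n) → EuclideanSpace ℝ (Fin n),
        Set.InvOn g
          (fun x : EuclideanSpace ℝ (Fin n) => ((∑ i, |x i|) / ‖x‖) • x)
          {x : EuclideanSpace ℝ (Fin n) | 1 / 2 < ∑ i, |x i| ∧ ∑ i, |x i| < 1}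
          {x : EuclideanSpace ℝ (Fin n) | 1 / 2 < ‖x‖ ∧ ‖x‖ < 1} ∧
        ∃ K' : NNReal,
          LipschitzOnWith K' g
            {x : EuclideanSpace ℝ (Fin n) | 1 / 2 < ‖x‖ ∧ ‖x‖ < 1} := by
  -- The goal is stated with `R p q` unfolded; all uses below match it definitionally.
  let p := l1Seminorm n
  let q := normSeminorm ℝ (EuclideanSpace ℝ (Fin n))
  have hpq : ∀ x, 1 / 2 < p x → 0 < q x := fun x hx => by
    have h : p x ≤ n * q x := l1Seminorm_le x
    by_contra hq
    have : (n : ℝ) * q x ≤ 0 := mul_nonpos_of_nonneg_of_nonpos n.cast_nonneg (not_lt.1 hq)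
    linarith
  have hqp : ∀ x, 1 / 2 < q x → 0 < p x := fun x hx => by
    have h : q x ≤ p x := norm_le_l1Seminorm x
    linarith
  have hinv : Set.InvOn (radialRescale q p) (radialRescale p q)
      {x | 1 / 2 < p x ∧ p x < 1} {x | 1 / 2 < q x ∧ q x < 1} :=
    ⟨fun x hx => radialRescale_radialRescale p q (by linarith [hx.1]) (hpq x hx.1),
      fun x hx => radialRescale_radialRescale q p (by linarith [hx.1]) (hqp x hx.1)⟩
  have hmaps : Set.MapsTo (radialRescale p q)
      {x | 1 / 2 < p x ∧ p x < 1} {x | 1 / 2 < q x ∧ q x < 1} := fun x hx => by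
    rw [Set.mem_ofPred_eq, radialRescale_apply p q (hpq x hx.1)]
    exact hx
  have hmaps' : Set.MapsTo (radialRescale q p)
      {x | 1 / 2 < q x ∧ q x < 1} {x | 1 / 2 < p x ∧ p x < 1} := fun x hx => by
    rw [Set.mem_ofPred_eq, radialRescale_apply q p (hqp x hx.1)]
    exact hx
  have hlip := lipschitzOnWith_radialRescale p q (a := n) (c := 1)
    (fun x => by simpa using l1Seminorm_le x) (fun x => le_rfl) (fun x => by simp [q])
  have hlip' := lipschitzOnWith_radialRescale q p (a := 1) (c := n)
    (fun x => by simp [q]) (fun x => norm_le_l1Seminorm x)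
    (fun x => by simpa using l1Seminorm_le x)
  exact ⟨hinv.bijOn hmaps hmaps', ⟨_, hlip.mono fun x hx => hpq x hx.1⟩,
    radialRescale q p, hinv, _, hlip'.mono fun x hx => hqp x hx.1⟩
end
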